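/- arXiv:2204.08419 — 9 statements merged into one kernel-verified Lean document; each statement's English description precedes it below -/
import Mathlib

section
/- Let F = (f_1, …, f_N) be a frame for an n-dimensional complex Hilbert space H with frame operator S_F, and let (q_i) be the weight numbers of a probability sequence. Set c = max_{1 ≤ i ≤ N} q_i ⟨S_F^{-1} f_i, f_i⟩, Υ_1 = { i : q_i ⟨S_F^{-1} f_i, f_i⟩ = c }, Υ_2 = {1, …, N} \ Υ_1, and H_j = span{ f_i : i ∈ Υ_j } for j = 1, 2. If H_1 ∩ H_2 = {0}, then for every dual G of F one has max_{1 ≤ i ≤ N} q_i |⟨f_i, g_i⟩| ≥ c = max_{1 ≤ i ≤ N} q_i |⟨f_i, S_F^{-1} f_i⟩|; that is, the canonical dual is a 1-erasure probabilistic spectrally optimal dual of F. -/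
/-!
For a dual `G` of `F` the adjoint reconstruction formula `∑ i, ⟪G i, f⟫ • F i = f` also holds.
Since `H₁ ⊓ H₂ = ⊥`, the partial sum `∑ i ∈ Υ₁, ⟪G i, f⟫ • F i` is the `H₁`-component of `f`, so it
does not depend on the dual (`partialSum_eq_of_dual`). Taking traces, `∑ i ∈ Υ₁, ⟪G i, F i⟫` is
the same for all duals (`sum_inner_eq_of_dual`). For the canonical dual it is `∑ i ∈ Υ₁, c / q i`,
so a dual with `q i * ‖⟪G i, F i⟫‖ < c` for all `i ∈ Υ₁` would contradict the triangle inequality.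
-/

open scoped InnerProductSpace

section DualFrames

variable {H : Type*} [NormedAddCommGroup H] [InnerProductSpace ℂ H]
  {ι : Type*} [Fintype ι]

/-- Duality of frames is symmetric. -/
lemma dual_symm {F G : ι → H} (hG : ∀ f : H, ∑ i, ⟪F i, f⟫_ℂ • G i = f) (f : H) :
    ∑ i, ⟪G i, f⟫_ℂ • F i = f := by
  refine ext_inner_left ℂ fun v => ?_
  conv_rhs => rw [← hG v]
  rw [inner_sum, sum_inner]
  refine Finset.sum_congr rfl fun i _ => ?_
  rw [inner_smul_right, inner_smul_left, inner_conj_symm, mul_comm]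

lemma partialSum_eq_of_dual {F G K : ι → H} (hG : ∀ f : H, ∑ i, ⟪F i, f⟫_ℂ • G i = f)
    (hK : ∀ f : H, ∑ i, ⟪F i, f⟫_ℂ • K i = f) (P : ι → Prop) [DecidablePred P]
    (hsep : Submodule.span ℂ (F '' {i | P i}) ⊓ Submodule.span ℂ (F '' {i | ¬ P i}) = ⊥) (f : H) :
    ∑ i with P i, ⟪G i, f⟫_ℂ • F i = ∑ i with P i, ⟪K i, f⟫_ℂ • F i := by
  have h := (dual_symm hG f).trans (dual_symm hK f).symm
  rw [← Finset.sum_filter_add_sum_filter_not _ P, ← Finset.sum_filter_add_sum_filter_not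
    (s := Finset.univ) (p := P) (f := fun i => ⟪K i, f⟫_ℂ • F i)] at h
  have mem (a : ι → ℂ) (Q : ι → Prop) [DecidablePred Q] :
      ∑ i with Q i, a i • F i ∈ Submodule.span ℂ (F '' {i | Q i}) :=
    Submodule.sum_mem _ fun i hi => Submodule.smul_mem _ _
      (Submodule.subset_span ⟨i, by simpa using hi, rfl⟩)
  rw [← sub_eq_zero, ← Submodule.mem_bot ℂ, ← hsep]
  refine ⟨Submodule.sub_mem _ (mem _ P) (mem _ P), ?_⟩
  -- the difference of the `P`-parts is minus the difference of the complementary parts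
  rw [sub_eq_sub_iff_add_eq_add.mpr (h.trans (add_comm _ _))]
  exact Submodule.sub_mem _ (mem _ fun i => ¬ P i) (mem _ fun i => ¬ P i)

/-- The trace of the common partial reconstruction operator of two duals. -/
lemma sum_inner_eq_of_dual [FiniteDimensional ℂ H] {F G K : ι → H}
    (hG : ∀ f : H, ∑ i, ⟪F i, f⟫_ℂ • G i = f)
    (hK : ∀ f : H, ∑ i, ⟪F i, f⟫_ℂ • K i = f) (P : ι → Prop) [DecidablePred P]
    (hsep : Submodule.span ℂ (F '' {i | P i}) ⊓ Submodule.span ℂ (F '' {i | ¬ P i}) = ⊥) :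
    ∑ i with P i, ⟪G i, F i⟫_ℂ = ∑ i with P i, ⟪K i, F i⟫_ℂ := by
  have key : ∑ i with P i, (InnerProductSpace.rankOne ℂ (F i) (G i)).toLinearMap
      = ∑ i with P i, (InnerProductSpace.rankOne ℂ (F i) (K i)).toLinearMap := by
    ext f
    simpa using partialSum_eq_of_dual hG hK P hsep f
  simpa [InnerProductSpace.trace_rankOne] using congrArg (LinearMap.trace ℂ H) key

end DualFrames

/-- Let `F` be a frame (spanning family) for an `n`-dimensional complex Hilbert
space with frame operator `S` (inverse `Sinv`), and `q` the weight numbers of a probability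
sequence.  Let `c = max_i q i ⟨S⁻¹ f i, f i⟩`, `Υ₁ = {i : q i ⟨S⁻¹ f i, f i⟩ = c}`,
`Υ₂` its complement, `H_j = span {f i : i ∈ Υ_j}`.  If `H₁ ⊓ H₂ = ⊥`, then `c` is also
`max_i q i |⟨f i, S⁻¹ f i⟩|` and every dual `G` of `F` satisfies
`max_i q i |⟨f i, g i⟩| ≥ c`, i.e. the canonical dual is a 1-erasure probabilistic
spectrally optimal dual of `F`.  (Paper's `⟨x, y⟩`, linear in the first argument, is
Mathlib's `⟪y, x⟫_ℂ`; the diagonal entries `⟨S⁻¹ f i, f i⟩ = ‖S^{-1/2} f i‖²` are real,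
so they are written via the real part.) -/
theorem canonical_dual_one_erasure_spectrally_optimal {H : Type*} [NormedAddCommGroup H]
    [InnerProductSpace ℂ H] [FiniteDimensional ℂ H] {n N : ℕ}
    (hn : 1 ≤ n) (hdim : Module.finrank ℂ H = n)
    (p : Fin N → ℝ) (hp0 : ∀ i, 0 ≤ p i) (hp1 : ∀ i, p i < 1) (hpsum : ∑ i, p i = 1)
    (q : Fin N → ℝ) (hq : ∀ i, q i = ((N : ℝ) - 1) / ((n : ℝ) * (1 - p i)))
    (F : Fin N → H) (hspan : Submodule.span ℂ (Set.range F) = ⊤)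
    (S Sinv : H →ₗ[ℂ] H)
    (hS : ∀ f : H, S f = ∑ i, ⟪F i, f⟫_ℂ • F i)
    (hSinv : ∀ f : H, S (Sinv f) = f ∧ Sinv (S f) = f)
    (c : ℝ)
    (hc : IsGreatest (Set.range fun i => q i * (⟪F i, Sinv (F i)⟫_ℂ).re) c)
    (hsep : Submodule.span ℂ (F '' {i | q i * (⟪F i, Sinv (F i)⟫_ℂ).re = c}) ⊓
        Submodule.span ℂ (F '' {i | q i * (⟪F i, Sinv (F i)⟫_ℂ).re ≠ c}) = ⊥) :
    IsGreatest (Set.range fun i => q i * ‖⟪Sinv (F i), F i⟫_ℂ‖) c ∧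
    ∀ G : Fin N → H, (∀ f : H, ∑ i, ⟪F i, f⟫_ℂ • G i = f) →
      ∃ i, c ≤ q i * ‖⟪G i, F i⟫_ℂ‖ := by
  classical
  -- `N ≥ 2`: an index exists, and for `N = 1` the only probability would be `1`
  obtain ⟨i₀, hi₀⟩ := hc.1
  have hN : 1 < N := by
    by_contra! h
    obtain rfl : N = 1 := le_antisymm h i₀.pos
    have := hp1 0
    simp at hpsum
    linarith
  have hqpos i : 0 < q i := by
    rw [hq]
    have h1 : (1 : ℝ) < N := by exact_mod_cast hN
    have h2 : (1 : ℝ) ≤ n := by exact_mod_cast hn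
    have := hp1 i
    exact div_pos (by linarith) (mul_pos (by linarith) (by linarith))
  -- `⟪x, S x⟫ = ∑ j, ‖⟪F j, x⟫‖²`, applied to `x = S⁻¹ (F i)`
  have hval i : ⟪Sinv (F i), F i⟫_ℂ = ((∑ j, ‖⟪F j, Sinv (F i)⟫_ℂ‖ ^ 2 : ℝ) : ℂ) := by
    have h : ⟪Sinv (F i), F i⟫_ℂ = ⟪Sinv (F i), S (Sinv (F i))⟫_ℂ := by rw [(hSinv _).1]
    rw [h, hS, inner_sum]
    push_cast
    refine Finset.sum_congr rfl fun j _ => ?_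
    rw [inner_smul_right, ← inner_conj_symm (Sinv (F i)) (F j), Complex.mul_conj']
  have hre i : (⟪F i, Sinv (F i)⟫_ℂ).re = ‖⟪Sinv (F i), F i⟫_ℂ‖ := by
    rw [← inner_conj_symm, Complex.conj_re, hval, Complex.ofReal_re, Complex.norm_real,
      Real.norm_of_nonneg (by positivity)]
  have hcoe i : ⟪Sinv (F i), F i⟫_ℂ = (‖⟪Sinv (F i), F i⟫_ℂ‖ : ℂ) := by
    rw [hval, Complex.norm_real, Real.norm_of_nonneg (by positivity)]
  simp only [hre] at hc hsep hi₀
  refine ⟨hc, fun G hG => ?_⟩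
  have hcan (f : H) : ∑ i, ⟪F i, f⟫_ℂ • Sinv (F i) = f := by
    conv_rhs => rw [← (hSinv f).2, hS]
    simp
  have hsum := sum_inner_eq_of_dual hG hcan
    (fun i => q i * ‖⟪Sinv (F i), F i⟫_ℂ‖ = c) hsep
  by_contra! hlt
  refine absurd (congrArg norm hsum) (ne_of_lt ?_)
  calc _ ≤ ∑ i with q i * ‖⟪Sinv (F i), F i⟫_ℂ‖ = c, ‖⟪G i, F i⟫_ℂ‖ := norm_sum_le _ _
    _ < ∑ i with q i * ‖⟪Sinv (F i), F i⟫_ℂ‖ = c, ‖⟪Sinv (F i), F i⟫_ℂ‖ := by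
      refine Finset.sum_lt_sum_of_nonempty ⟨i₀, by simpa using hi₀⟩ fun i hi => ?_
      have h := hlt i
      rw [← (Finset.mem_filter.mp hi).2] at h
      exact lt_of_mul_lt_mul_left h (hqpos i).le
    _ = _ := by
      rw [Finset.sum_congr rfl fun i _ => hcoe i, ← Complex.ofReal_sum, Complex.norm_real,
        Real.norm_of_nonneg (Finset.sum_nonneg fun _ _ => norm_nonneg _)]
end

section
/- Let (q_i) be the weight numbers of a probability sequence (p_i) for an n-dimensional complex Hilbert space H. Then for every dual pair (F,G) of N-element families in H, max_{1 ≤ i ≤ N} q_i |⟨f_i, g_i⟩| ≥ 1. -/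
open scoped InnerProductSpace

/-!
Duality says that the identity is the sum of the rank-one maps `f ↦ ⟪F i, f⟫ • G i`. Taking traces,
`∑ i, ⟪F i, G i⟫ = n`, so `n ≤ ∑ i, |⟪G i, F i⟫|`. If every `q i * |⟪G i, F i⟫|` were `< 1`, then
`|⟪G i, F i⟫| < n (1 - p i) / (N - 1)` for each `i`, and since `∑ i, (1 - p i) = N - 1`, the sum
would be `< n`. That `N ≥ 2`, so that the division by `N - 1` is legitimate, follows from
`0 < ∑ i, (1 - p i)`.
-/

/-- The trace of the identity, computed from its decomposition into rank-one maps. -/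
lemma sum_inner_eq_finrank_of_dual {H : Type*} [NormedAddCommGroup H]
    [InnerProductSpace ℂ H] [FiniteDimensional ℂ H] {N : ℕ} (F G : Fin N → H)
    (hdual : ∀ f : H, ∑ i, ⟪F i, f⟫_ℂ • G i = f) :
    ∑ i, ⟪F i, G i⟫_ℂ = (Module.finrank ℂ H : ℂ) := by
  have hid : ∑ i, ((innerSL ℂ (F i)).toLinearMap.smulRight (G i)) = LinearMap.id := by
    ext f
    simpa using hdual f
  have htr := congrArg (LinearMap.trace ℂ H) hid
  simpa [LinearMap.trace_smulRight, LinearMap.trace_id] using htr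

theorem dual_pair_spectral_one_erasure_lower_bound {H : Type*} [NormedAddCommGroup H]
    [InnerProductSpace ℂ H] [FiniteDimensional ℂ H] {n N : ℕ}
    (hn : 1 ≤ n) (hdim : Module.finrank ℂ H = n)
    (p : Fin N → ℝ) (hp0 : ∀ i, 0 ≤ p i) (hp1 : ∀ i, p i < 1) (hpsum : ∑ i, p i = 1)
    (q : Fin N → ℝ) (hq : ∀ i, q i = ((N : ℝ) - 1) / ((n : ℝ) * (1 - p i)))
    (F G : Fin N → H)
    (hdual : ∀ f : H, ∑ i, ⟪F i, f⟫_ℂ • G i = f) :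
    ∃ i, 1 ≤ q i * ‖⟪G i, F i⟫_ℂ‖ := by
  have hnonempty : (Finset.univ : Finset (Fin N)).Nonempty := by
    by_contra h
    rw [Finset.not_nonempty_iff_eq_empty] at h
    simp [h] at hpsum
  have hsum : ∑ i, (1 - p i) = (N : ℝ) - 1 := by
    simp [Finset.sum_sub_distrib, hpsum]
  have hN : 0 < (N : ℝ) - 1 :=
    hsum ▸ Finset.sum_pos (fun i _ => sub_pos.2 (hp1 i)) hnonempty
  have hn0 : (0 : ℝ) < n := by exact_mod_cast hn
  have htrace : (n : ℝ) ≤ ∑ i, ‖⟪G i, F i⟫_ℂ‖ := by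
    have h := sum_inner_eq_finrank_of_dual F G hdual
    rw [hdim] at h
    calc (n : ℝ) = ‖∑ i, ⟪F i, G i⟫_ℂ‖ := by rw [h, Complex.norm_natCast]
      _ ≤ ∑ i, ‖⟪F i, G i⟫_ℂ‖ := norm_sum_le _ _
      _ = ∑ i, ‖⟪G i, F i⟫_ℂ‖ := Finset.sum_congr rfl fun i _ => norm_inner_symm _ _
  by_contra! hlt
  have hbound : ∀ i, ‖⟪G i, F i⟫_ℂ‖ < (n : ℝ) * (1 - p i) / ((N : ℝ) - 1) := by
    intro i
    have hd : 0 < (n : ℝ) * (1 - p i) := mul_pos hn0 (sub_pos.2 (hp1 i))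
    have h := hlt i
    rw [hq i, div_mul_eq_mul_div, div_lt_one hd] at h
    rwa [lt_div_iff₀ hN, mul_comm]
  have hcontra : ∑ i, ‖⟪G i, F i⟫_ℂ‖ < n := by
    calc ∑ i, ‖⟪G i, F i⟫_ℂ‖ < ∑ i, (n : ℝ) * (1 - p i) / ((N : ℝ) - 1) :=
          Finset.sum_lt_sum_of_nonempty hnonempty fun i _ => hbound i
      _ = n := by
          rw [← Finset.sum_div, ← Finset.mul_sum, hsum, mul_div_cancel_right₀ _ hN.ne']
  exact absurd htrace hcontra.not_ge
end

section
/- Let (q_i) be the weight numbers of a probability sequence (p_i) for an n-dimensional complex Hilbert space H, and let (F,G) be a dual pair of N-element families in H. Then max_{1 ≤ i ≤ N} q_i |⟨f_i, g_i⟩| = 1 if and only if ⟨f_i, g_i⟩ = 1/q_i for every 1 ≤ i ≤ N. -/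
/-!
The frame operator identity `∑ i, ⟨·, f i⟩ g i = id` has trace `∑ i, ⟨g i, f i⟩ = n`, so
`∑ i, Re ⟨f i, g i⟩ = n` (`sum_re_inner_of_dual`). On the other hand the weight numbers are positive
and `∑ i, 1 / q i = (n / (N - 1)) ∑ i, (1 - p i) = n`. If the maximum is `1`, then
`Re ⟨f i, g i⟩ ≤ |⟨f i, g i⟩| ≤ 1 / q i` for every `i`; since both ends have the same sum, all these
inequalities are equalities, and a complex number whose real part equals its modulus is real.
The converse is immediate: each `q i |⟨f i, g i⟩|` equals `1`.
-/

open scoped InnerProductSpace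

/-- The maximum of a real-valued function on the (nonempty) index set `Fin N`. -/
noncomputable def finMax {N : ℕ} (hN : 0 < N) (f : Fin N → ℝ) : ℝ :=
  Finset.univ.sup' (Finset.univ_nonempty_iff.mpr (Fin.pos_iff_nonempty.mp hN)) f

/-- The real parts of the pairings of a dual pair sum to the dimension: this is the trace of the
reconstruction formula. -/
lemma sum_re_inner_of_dual {H : Type*} [NormedAddCommGroup H]
    [InnerProductSpace ℂ H] [FiniteDimensional ℂ H] {N : ℕ} (F G : Fin N → H)
    (hdual : ∀ f : H, ∑ i, ⟪F i, f⟫_ℂ • G i = f) :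
    ∑ i, (⟪G i, F i⟫_ℂ).re = (Module.finrank ℂ H : ℝ) := by
  have hid : ∑ i, ((innerSL ℂ (F i) : H →L[ℂ] ℂ) : H →ₗ[ℂ] ℂ).smulRight (G i)
      = LinearMap.id := by
    ext f
    simpa using hdual f
  have htr := congrArg (LinearMap.trace ℂ H) hid
  rw [map_sum, LinearMap.trace_id] at htr
  simp only [LinearMap.trace_smulRight, ContinuousLinearMap.coe_coe, innerSL_apply_apply] at htr
  have hre := congrArg Complex.re htr
  rw [Complex.re_sum, Complex.natCast_re] at hre
  rw [← hre]
  refine Finset.sum_congr rfl fun i _ => ?_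
  rw [← inner_conj_symm, Complex.conj_re]

/-- For `b i` with `∑ i, Re (z i) = ∑ i, b i`, the bounds `|z i| ≤ b i` force `z i = b i`. -/
lemma eq_ofReal_of_norm_le_of_sum_re_eq {ι : Type*} [Fintype ι] {z : ι → ℂ} {b : ι → ℝ}
    (hle : ∀ i, ‖z i‖ ≤ b i) (hsum : ∑ i, (z i).re = ∑ i, b i) (i : ι) : z i = (b i : ℂ) := by
  have hre : (z i).re = b i :=
    (Finset.sum_eq_sum_iff_of_le fun j _ => (Complex.re_le_norm (z j)).trans (hle j)).1 hsum i
      (Finset.mem_univ i)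
  have hnorm : (z i).re = ‖z i‖ :=
    le_antisymm (Complex.re_le_norm _) (hre ▸ hle i)
  have him : (z i).im = 0 := by
    have hsq := Complex.sq_norm (z i)
    rw [Complex.normSq_apply, ← hnorm] at hsq
    nlinarith
  exact Complex.ext (by simpa using hre) (by simpa using him)

/-- For weight numbers `q` of a probability sequence on an `n`-dimensional
complex Hilbert space and a dual pair `(F,G)`:
`max_i q i |⟨f i, g i⟩| = 1` iff `⟨f i, g i⟩ = 1 / q i` for every `i`.
Here `⟨f i, g i⟩` (linear in the first argument) is Mathlib's `⟪G i, F i⟫_ℂ`. -/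
theorem max_eq_one_iff_probabilistic_one_uniform {H : Type*} [NormedAddCommGroup H]
    [InnerProductSpace ℂ H] [FiniteDimensional ℂ H] {n N : ℕ}
    (hn : 1 ≤ n) (hdim : Module.finrank ℂ H = n) (hN : 0 < N)
    (p : Fin N → ℝ) (hp0 : ∀ i, 0 ≤ p i) (hp1 : ∀ i, p i < 1) (hpsum : ∑ i, p i = 1)
    (q : Fin N → ℝ) (hq : ∀ i, q i = ((N : ℝ) - 1) / ((n : ℝ) * (1 - p i)))
    (F G : Fin N → H)
    (hdual : ∀ f : H, ∑ i, ⟪F i, f⟫_ℂ • G i = f) :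
    finMax hN (fun i => q i * ‖⟪G i, F i⟫_ℂ‖) = 1 ↔
      ∀ i, ⟪G i, F i⟫_ℂ = ((1 / q i : ℝ) : ℂ) := by
  have hnpos : (0 : ℝ) < n := by exact_mod_cast hn
  -- `N = 1` would force `p 0 = 1`, so the numerator `N - 1 = ∑ i, (1 - p i)` is positive.
  have hsum1 : ∑ i, (1 - p i) = (N : ℝ) - 1 := by
    simp [Finset.sum_sub_distrib, hpsum]
  have hNpos : (0 : ℝ) < (N : ℝ) - 1 := by
    rw [← hsum1]
    exact Finset.sum_pos (fun i _ => sub_pos.2 (hp1 i)) ⟨⟨0, hN⟩, Finset.mem_univ _⟩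
  have hqpos : ∀ i, 0 < q i := fun i => by
    rw [hq i]
    exact div_pos hNpos (mul_pos hnpos (sub_pos.2 (hp1 i)))
  have hqsum : ∑ i, 1 / q i = (n : ℝ) := by
    simp only [hq, one_div_div]
    rw [← Finset.sum_div, ← Finset.mul_sum, hsum1, mul_div_assoc, div_self hNpos.ne', mul_one]
  constructor
  · intro hmax
    refine eq_ofReal_of_norm_le_of_sum_re_eq (fun i => ?_) ?_
    · rw [le_div_iff₀' (hqpos i), ← hmax]
      exact Finset.le_sup' (fun i => q i * ‖⟪G i, F i⟫_ℂ‖) (Finset.mem_univ i)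
    · rw [sum_re_inner_of_dual F G hdual, hdim, hqsum]
  · intro h
    have hone : (fun i => q i * ‖⟪G i, F i⟫_ℂ‖) = fun _ => (1 : ℝ) := by
      funext i
      rw [h i, Complex.norm_real, Real.norm_of_nonneg (one_div_pos.2 (hqpos i)).le,
        mul_one_div_cancel (hqpos i).ne']
    rw [hone, finMax, Finset.sup'_const]
end

section
/- Let (F,G) be a dual pair in an n-dimensional complex Hilbert space H, let (q_i) be the weight numbers of a probability sequence, and let 1 ≤ i ≠ j ≤ N. Then the spectral radius (over ℂ) of the two-erasure error operator E_{ij} : H → H, E_{ij} f = q_i ⟨f, f_i⟩ g_i + q_j ⟨f, f_j⟩ g_j, equals max(|λ_+|, |λ_−|), where λ_+ and λ_− are the two complex roots (with multiplicity) of the quadratic equation z² − (q_i ⟨g_i, f_i⟩ + q_j ⟨g_j, f_j⟩) z + q_i q_j ( ⟨g_i, f_i⟩⟨g_j, f_j⟩ − ⟨g_i, f_j⟩⟨g_j, f_i⟩ ) = 0. -/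
/-!
The operator `E` has rank at most two, and its nonzero spectrum is that of its `2 × 2` compression:
with `c : H → ℂ²`, `c v = (⟪F i, v⟫, ⟪F j, v⟫)`, and `s : ℂ² → H`,
`s (x, y) = x q i G i + y q j G j`, one has `E = s ∘ c`, so `E` and the matrix of `c ∘ s` have the
same nonzero eigenvalues (`hasEigenvalue_iff_root`). The characteristic polynomial of `c ∘ s` is
`(z - λ₊)(z - λ₋)`. The spectrum of an operator on a finite-dimensional space is its set of
eigenvalues, and neither the value `0` in the spectrum nor a zero root affects the maximum modulus.
-/

open scoped InnerProductSpace ENNReal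

/-- On a finite-dimensional space, the spectrum of a continuous operator is its set of
eigenvalues. -/
lemma mem_spectrum_iff_exists_eigenvector {H : Type*} [NormedAddCommGroup H]
    [InnerProductSpace ℂ H] [FiniteDimensional ℂ H] (E : H →L[ℂ] H) (μ : ℂ) :
    μ ∈ spectrum ℂ E ↔ ∃ v : H, v ≠ 0 ∧ E v = μ • v := by
  rw [← AlgEquiv.spectrum_eq (Module.End.toContinuousLinearMap H).symm E,
    ← Module.End.hasEigenvalue_iff_mem_spectrum]
  constructor
  · intro h
    obtain ⟨v, hv⟩ := h.exists_hasEigenvector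
    exact ⟨v, hv.2, hv.apply_eq_smul⟩
  · rintro ⟨v, hv0, hv⟩
    exact Module.End.hasEigenvalue_of_hasEigenvector
      (Module.End.hasEigenvector_iff.2 ⟨Module.End.mem_eigenspace_iff.2 hv, hv0⟩)

/-- A nonzero number is an eigenvalue of `v ↦ a ⟪f, v⟫ g + b ⟪f', v⟫ g'` if and only if it is a
root of the characteristic polynomial of the `2 × 2` compression. -/
lemma hasEigenvalue_iff_root {H : Type*} [NormedAddCommGroup H] [InnerProductSpace ℂ H]
    (a b : ℂ) (f f' g g' : H) (μ : ℂ) (hμ : μ ≠ 0) :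
    (∃ v : H, v ≠ 0 ∧ (a * ⟪f, v⟫_ℂ) • g + (b * ⟪f', v⟫_ℂ) • g' = μ • v) ↔
      (μ - a * ⟪f, g⟫_ℂ) * (μ - b * ⟪f', g'⟫_ℂ) - a * b * (⟪f', g⟫_ℂ * ⟪f, g'⟫_ℂ) = 0 := by
  have hdet : (∃ w : Fin 2 → ℂ, w ≠ 0 ∧
      Matrix.mulVec !![μ - a * ⟪f, g⟫_ℂ, -(b * ⟪f, g'⟫_ℂ);
        -(a * ⟪f', g⟫_ℂ), μ - b * ⟪f', g'⟫_ℂ] w = 0) ↔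
      (μ - a * ⟪f, g⟫_ℂ) * (μ - b * ⟪f', g'⟫_ℂ) - a * b * (⟪f', g⟫_ℂ * ⟪f, g'⟫_ℂ) = 0 := by
    rw [Matrix.exists_mulVec_eq_zero_iff, Matrix.det_fin_two_of]
    constructor <;> intro h <;> linear_combination h
  rw [← hdet]
  constructor
  · rintro ⟨v, hv0, hv⟩
    -- the eigenvector of the compression is `c v`; it is nonzero since `μ v = s (c v)`
    refine ⟨![⟪f, v⟫_ℂ, ⟪f', v⟫_ℂ], ?_, ?_⟩
    · intro h
      have h0 : ⟪f, v⟫_ℂ = 0 := congrFun h 0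
      have h1 : ⟪f', v⟫_ℂ = 0 := congrFun h 1
      rw [h0, h1] at hv
      simp [hμ, hv0, eq_comm] at hv
    · have h0 := congrArg (fun u => ⟪f, u⟫_ℂ) hv
      have h1 := congrArg (fun u => ⟪f', u⟫_ℂ) hv
      simp only [inner_add_right, inner_smul_right] at h0 h1
      ext k
      fin_cases k
      · simp [Matrix.mulVec, dotProduct]
        linear_combination -h0
      · simp [Matrix.mulVec, dotProduct]
        linear_combination -h1
  · rintro ⟨w, hw0, hw⟩
    -- the eigenvector is `s w = a (w 0) g + b (w 1) g'`; it is nonzero since `c (s w) = μ w`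
    have h0 := congrFun hw 0
    have h1 := congrFun hw 1
    simp [Matrix.mulVec, dotProduct] at h0 h1
    have e0 : ⟪f, (a * w 0) • g + (b * w 1) • g'⟫_ℂ = μ * w 0 := by
      simp only [inner_add_right, inner_smul_right]
      linear_combination -h0
    have e1 : ⟪f', (a * w 0) • g + (b * w 1) • g'⟫_ℂ = μ * w 1 := by
      simp only [inner_add_right, inner_smul_right]
      linear_combination -h1
    refine ⟨(a * w 0) • g + (b * w 1) • g', ?_, ?_⟩
    · intro h
      rw [h, inner_zero_right] at e0 e1
      apply hw0
      ext k
      fin_cases k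
      · simpa [hμ] using e0.symm
      · simpa [hμ] using e1.symm
    · rw [e0, e1]
      module


/-- For a dual pair `(F,G)` with weight numbers `q` and indices `i ≠ j`, the
spectral radius of the two-erasure error operator
`E f = q i ⟨f, f i⟩ g i + q j ⟨f, f j⟩ g j` equals `max (|λ₊|, |λ₋|)`, where `λ₊, λ₋` are
the two complex roots (with multiplicity, i.e. given by Vieta's relations) of
`z² − (q i ⟨g i, f i⟩ + q j ⟨g j, f j⟩) z
   + q i q j (⟨g i, f i⟩⟨g j, f j⟩ − ⟨g i, f j⟩⟨g j, f i⟩) = 0`.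
Paper's `⟨x, y⟩` (linear in the first argument) is Mathlib's `⟪y, x⟫_ℂ`. -/
theorem two_erasure_spectral_radius_roots {H : Type*} [NormedAddCommGroup H]
    [InnerProductSpace ℂ H] [FiniteDimensional ℂ H] {n N : ℕ}
    (hn : 1 ≤ n) (hdim : Module.finrank ℂ H = n)
    (p : Fin N → ℝ) (hp0 : ∀ i, 0 ≤ p i) (hp1 : ∀ i, p i < 1) (hpsum : ∑ i, p i = 1)
    (q : Fin N → ℝ) (hq : ∀ i, q i = ((N : ℝ) - 1) / ((n : ℝ) * (1 - p i)))
    (F G : Fin N → H)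
    (hdual : ∀ f : H, ∑ i, ⟪F i, f⟫_ℂ • G i = f)
    (i j : Fin N) (hij : i ≠ j)
    (E : H →L[ℂ] H)
    (hE : ∀ f : H, E f = ((q i : ℂ) * ⟪F i, f⟫_ℂ) • G i + ((q j : ℂ) * ⟪F j, f⟫_ℂ) • G j)
    (lp lm : ℂ)
    (hsum : lp + lm = (q i : ℂ) * ⟪F i, G i⟫_ℂ + (q j : ℂ) * ⟪F j, G j⟫_ℂ)
    (hprod : lp * lm = ((q i * q j : ℝ) : ℂ) *
      (⟪F i, G i⟫_ℂ * ⟪F j, G j⟫_ℂ - ⟪F j, G i⟫_ℂ * ⟪F i, G j⟫_ℂ)) :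
    spectralRadius ℂ E = max (ENNReal.ofReal ‖lp‖) (ENNReal.ofReal ‖lm‖) := by
  have key : ∀ μ : ℂ, μ ≠ 0 → (μ ∈ spectrum ℂ E ↔ μ = lp ∨ μ = lm) := by
    intro μ hμ
    rw [mem_spectrum_iff_exists_eigenvector]
    simp only [hE]
    rw [hasEigenvalue_iff_root _ _ _ _ _ _ μ hμ, ← sub_eq_zero (b := lp),
      ← sub_eq_zero (b := lm), ← mul_eq_zero]
    push_cast at hprod
    constructor <;> intro h
    · linear_combination h - μ * hsum + hprod
    · linear_combination h + μ * hsum - hprod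
  simp only [ofReal_norm, enorm_eq_nnnorm]
  apply le_antisymm
  · refine iSup₂_le fun k hk => ?_
    rcases eq_or_ne k 0 with rfl | hk0
    · simp
    · rcases (key k hk0).1 hk with rfl | rfl
      · exact le_max_left _ _
      · exact le_max_right _ _
  · have root_le : ∀ k : ℂ, (k = lp ∨ k = lm) → (‖k‖₊ : ℝ≥0∞) ≤ spectralRadius ℂ E := by
      intro k hk
      rcases eq_or_ne k 0 with rfl | hk0
      · simp
      · exact le_iSup₂ (f := fun (k : ℂ) (_ : k ∈ spectrum ℂ E) => (‖k‖₊ : ℝ≥0∞)) k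
          ((key k hk0).2 hk)
    exact max_le (root_le lp (Or.inl rfl)) (root_le lm (Or.inr rfl))
end

section
/- Let (F,G) be a dual pair of N-element families (N ≥ 2) in an n-dimensional complex Hilbert space H with weight numbers (q_i). Assume every ⟨g_i, f_i⟩ is real and nonnegative, and that there is a real constant c > 0 with q_i q_j ⟨g_j, f_i⟩⟨g_i, f_j⟩ = c for all i ≠ j. Set R_1 = max_{1 ≤ i ≤ N} q_i ⟨g_i, f_i⟩ and ζ = { i : q_i ⟨g_i, f_i⟩ = R_1 }. If ζ contains exactly one element, then R_2^p(F,G) = (1/2) [ R_1 + M + √( (R_1 − M)² + 4c ) ], where M = max_{i ∉ ζ} q_i ⟨g_i, f_i⟩. -/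
/-!
The operator `E i j` has rank at most two, and on the span of `G i`, `G j` it is governed by the
`2 × 2` matrix with diagonal `a = q i ⟨g i, f i⟩`, `b = q j ⟨g j, f j⟩` and off-diagonal product
`c`. Its nonzero eigenvalues are therefore roots of `(z - a) (z - b) = c`. Since `a, b ≥ 0` and
`c > 0`, the root of larger modulus is `(a + b + √((a - b)² + 4 c)) / 2`, which is positive; the
corresponding eigenvector of the matrix lifts to an eigenvector of `E i j`, so this root is the
spectral radius (`spectralRadius_rank_two`).

This root is monotone in `a` and `b` (`pairRoot_mono`). Among two distinct indices at least one
lies outside `ζ`, so the pair of diagonal values is bounded by `(R₁, M)` up to order, and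
the index in `ζ` together with an index realizing `M` attains the bound.
-/

open scoped InnerProductSpace ENNReal

/-- The larger real root of `(z - a) (z - b) = c`, for `c > 0`. -/
noncomputable def pairRoot (a b c : ℝ) : ℝ := (a + b + Real.sqrt ((a - b) ^ 2 + 4 * c)) / 2

lemma pairRoot_comm (a b c : ℝ) : pairRoot a b c = pairRoot b a c := by
  unfold pairRoot
  rw [show (a - b) ^ 2 = (b - a) ^ 2 by ring, add_comm a b]

lemma pairRoot_eq {a b c : ℝ} (hc : 0 < c) :
    (pairRoot a b c - a) * (pairRoot a b c - b) = c := by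
  have h := Real.sq_sqrt (show 0 ≤ (a - b) ^ 2 + 4 * c by positivity)
  unfold pairRoot
  linear_combination h / 4

lemma le_pairRoot_left {a b c : ℝ} (hc : 0 < c) : a ≤ pairRoot a b c := by
  have h : a - b ≤ Real.sqrt ((a - b) ^ 2 + 4 * c) := Real.le_sqrt_of_sq_le (by linarith)
  unfold pairRoot
  linarith

lemma le_pairRoot_right {a b c : ℝ} (hc : 0 < c) : b ≤ pairRoot a b c := by
  rw [pairRoot_comm]
  exact le_pairRoot_left hc

lemma pairRoot_pos {a b c : ℝ} (ha : 0 ≤ a) (hb : 0 ≤ b) (hc : 0 < c) : 0 < pairRoot a b c := by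
  have h : 0 < Real.sqrt ((a - b) ^ 2 + 4 * c) := Real.sqrt_pos.2 (by positivity)
  unfold pairRoot
  linarith

/-- If `L` is the root for `(a', b')`, then `(L - a) (L - b) ≥ c` with `a, b ≤ L`, so `L` lies to
the right of the larger root for `(a, b)`. -/
lemma pairRoot_mono {a b a' b' c : ℝ} (ha : a ≤ a') (hb : b ≤ b') (hc : 0 < c) :
    pairRoot a b c ≤ pairRoot a' b' c := by
  have h := pairRoot_eq (a := a') (b := b') hc
  have h1 := le_pairRoot_left (a := a') (b := b') hc
  have h2 := le_pairRoot_right (a := a') (b := b') hc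
  generalize pairRoot a' b' c = L at h h1 h2 ⊢
  have h3 : c ≤ (L - a) * (L - b) := by
    rw [← h]
    exact mul_le_mul (by linarith) (by linarith) (by linarith) (by linarith)
  have h4 : Real.sqrt ((a - b) ^ 2 + 4 * c) ≤ 2 * L - a - b :=
    Real.sqrt_le_iff.2 ⟨by linarith, by nlinarith⟩
  unfold pairRoot
  linarith

/-- The other root of `(z - a) (z - b) = c` is `a + b - pairRoot a b c`, which is at most
`pairRoot a b c` in absolute value when `a, b ≥ 0`. -/
lemma norm_le_pairRoot {a b c : ℝ} (ha : 0 ≤ a) (hb : 0 ≤ b) (hc : 0 < c) {z : ℂ}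
    (hz : (z - a) * (z - b) = c) : ‖z‖ ≤ pairRoot a b c := by
  have h := pairRoot_eq (a := a) (b := b) hc
  have h1 := le_pairRoot_left (a := a) (b := b) hc
  have h2 := le_pairRoot_right (a := a) (b := b) hc
  generalize pairRoot a b c = L at h h1 h2 ⊢
  have hC : ((L : ℂ) - a) * (L - b) = c := by exact_mod_cast h
  have hfac : (z - L) * (z - ((a + b - L : ℝ) : ℂ)) = 0 := by
    push_cast
    linear_combination hz - hC
  rcases mul_eq_zero.1 hfac with h0 | h0
  · rw [sub_eq_zero.1 h0, Complex.norm_real, Real.norm_eq_abs, abs_of_nonneg (by linarith)]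
  · rw [sub_eq_zero.1 h0, Complex.norm_real, Real.norm_eq_abs, abs_le]
    constructor <;> linarith

/-- The vectors `x`, `y` may be linearly dependent: `pairRoot a b c` is an eigenvalue of `T`
nevertheless, because it is nonzero. -/
lemma spectralRadius_rank_two {H : Type*} [NormedAddCommGroup H] [InnerProductSpace ℂ H]
    [FiniteDimensional ℂ H] (T : H →L[ℂ] H) (s t : ℂ) (u v x y : H)
    (hT : ∀ f, T f = (s * ⟪u, f⟫_ℂ) • x + (t * ⟪v, f⟫_ℂ) • y) {a b c : ℝ}
    (ha : 0 ≤ a) (hb : 0 ≤ b) (hc : 0 < c) (hux : s * ⟪u, x⟫_ℂ = a) (hvy : t * ⟪v, y⟫_ℂ = b)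
    (hoff : (s * ⟪u, y⟫_ℂ) * (t * ⟪v, x⟫_ℂ) = c) :
    spectralRadius ℂ T = ENNReal.ofReal (pairRoot a b c) := by
  have : CompleteSpace H := FiniteDimensional.complete ℂ H
  have hpos := pairRoot_pos ha hb hc
  apply le_antisymm
  · refine iSup₂_le fun z hz => ?_
    rw [ContinuousLinearMap.spectrum_eq, ← Module.End.hasEigenvalue_iff_mem_spectrum] at hz
    obtain ⟨w, hw⟩ := hz.exists_hasEigenvector
    have hzw : (s * ⟪u, w⟫_ℂ) • x + (t * ⟪v, w⟫_ℂ) • y = z • w := by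
      rw [← hT]
      exact hw.apply_eq_smul
    have hle : ‖z‖ ≤ pairRoot a b c := by
      have e1 : s * ⟪u, w⟫_ℂ * a + t * ⟪v, w⟫_ℂ * (s * ⟪u, y⟫_ℂ) = z * (s * ⟪u, w⟫_ℂ) := by
        have := congrArg (fun m => s * ⟪u, m⟫_ℂ) hzw
        simp only [inner_add_right, inner_smul_right] at this
        linear_combination this - s * ⟪u, w⟫_ℂ * hux
      have e2 : s * ⟪u, w⟫_ℂ * (t * ⟪v, x⟫_ℂ) + t * ⟪v, w⟫_ℂ * b = z * (t * ⟪v, w⟫_ℂ) := by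
        have := congrArg (fun m => t * ⟪v, m⟫_ℂ) hzw
        simp only [inner_add_right, inner_smul_right] at this
        linear_combination this - t * ⟪v, w⟫_ℂ * hvy
      generalize s * ⟪u, w⟫_ℂ = α at *
      generalize t * ⟪v, w⟫_ℂ = β at *
      generalize s * ⟪u, y⟫_ℂ = k at *
      generalize t * ⟪v, x⟫_ℂ = l at *
      -- the determinant of the `2 × 2` system kills both coordinates
      have d1 : ((z - a) * (z - b) - c) * α = 0 := by
        linear_combination (-(z - b)) * e1 - k * e2 + α * hoff
      have d2 : ((z - a) * (z - b) - c) * β = 0 := by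
        linear_combination (-(z - a)) * e2 - l * e1 + β * hoff
      by_cases hdet : (z - a) * (z - b) - c = 0
      · exact norm_le_pairRoot ha hb hc (sub_eq_zero.1 hdet)
      · have hα := (mul_eq_zero.1 d1).resolve_left hdet
        have hβ := (mul_eq_zero.1 d2).resolve_left hdet
        rw [hα, hβ, zero_smul, zero_smul, add_zero] at hzw
        have hz0 : z = 0 := (smul_eq_zero.1 hzw.symm).resolve_right hw.2
        rw [hz0, norm_zero]
        exact hpos.le
    change ‖z‖ₑ ≤ _
    rw [← ofReal_norm]
    exact ENNReal.ofReal_le_ofReal hle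
  · have hroot := pairRoot_eq (a := a) (b := b) hc
    generalize pairRoot a b c = L at hpos hroot ⊢
    have hrootC : ((L : ℂ) - a) * (L - b) = c := by exact_mod_cast hroot
    have hk : s * ⟪u, y⟫_ℂ ≠ 0 := by
      intro h
      rw [h, zero_mul] at hoff
      exact hc.ne (by exact_mod_cast hoff)
    -- `(s ⟪u, y⟫, L - a)` is an eigenvector of the `2 × 2` matrix for the eigenvalue `L`
    let w : H := (s * ⟪u, y⟫_ℂ) • x + ((L : ℂ) - a) • y
    have hw1 : s * ⟪u, w⟫_ℂ = L * (s * ⟪u, y⟫_ℂ) := by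
      simp only [w, inner_add_right, inner_smul_right]
      linear_combination s * ⟪u, y⟫_ℂ * hux
    have hw2 : t * ⟪v, w⟫_ℂ = L * ((L : ℂ) - a) := by
      simp only [w, inner_add_right, inner_smul_right]
      linear_combination hoff + ((L : ℂ) - a) * hvy - hrootC
    have hw0 : w ≠ 0 := by
      intro h
      rw [h, inner_zero_right, mul_zero] at hw1
      exact mul_ne_zero (by exact_mod_cast hpos.ne') hk hw1.symm
    have hmem : (L : ℂ) ∈ spectrum ℂ T := by
      rw [ContinuousLinearMap.spectrum_eq, ← Module.End.hasEigenvalue_iff_mem_spectrum]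
      refine Module.End.hasEigenvalue_of_hasEigenvector (x := w)
        ⟨Module.End.mem_eigenspace_iff.2 ?_, hw0⟩
      change T w = (L : ℂ) • w
      rw [hT, hw1, hw2, mul_smul (L : ℂ), mul_smul (L : ℂ), ← smul_add]
    refine le_trans (le_of_eq ?_) (le_iSup₂ (f := fun (k : ℂ) (_ : k ∈ spectrum ℂ T) =>
      (‖k‖₊ : ℝ≥0∞)) (L : ℂ) hmem)
    change _ = ‖(L : ℂ)‖ₑ
    rw [← ofReal_norm, Complex.norm_real, Real.norm_of_nonneg hpos.le]

/-- Let `(F,G)` be a dual pair (`N ≥ 2`) with weight numbers `q`, all diagonal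
inner products `⟨g i, f i⟩` real and nonnegative, and off-diagonal products
`q i q j ⟨g j, f i⟩⟨g i, f j⟩ = c > 0` constant.  With
`R₁ = max_i q i ⟨g i, f i⟩` and `ζ = {i : q i ⟨g i, f i⟩ = R₁}` a singleton, and
`M = max_{i ∉ ζ} q i ⟨g i, f i⟩`, the two-erasure quantity
`R₂ᵖ(F,G) = max_{i ≠ j} ρ(E i j)` equals `(R₁ + M + √((R₁ − M)² + 4c)) / 2`.
Paper's `⟨x, y⟩` (linear in the first argument) is Mathlib's `⟪y, x⟫_ℂ`; the real diagonal
values are written via real parts. -/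
theorem two_erasure_value_unique_max {H : Type*} [NormedAddCommGroup H]
    [InnerProductSpace ℂ H] [FiniteDimensional ℂ H] {n N : ℕ}
    (hn : 1 ≤ n) (hdim : Module.finrank ℂ H = n) (hN : 2 ≤ N)
    (p : Fin N → ℝ) (hp0 : ∀ i, 0 ≤ p i) (hp1 : ∀ i, p i < 1) (hpsum : ∑ i, p i = 1)
    (q : Fin N → ℝ) (hq : ∀ i, q i = ((N : ℝ) - 1) / ((n : ℝ) * (1 - p i)))
    (F G : Fin N → H)
    (hdual : ∀ f : H, ∑ i, ⟪F i, f⟫_ℂ • G i = f)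
    (hreal : ∀ i, ∃ r : ℝ, 0 ≤ r ∧ ⟪F i, G i⟫_ℂ = (r : ℂ))
    (c : ℝ) (hcpos : 0 < c)
    (hoff : ∀ i j, i ≠ j →
      ((q i * q j : ℝ) : ℂ) * ⟪F i, G j⟫_ℂ * ⟪F j, G i⟫_ℂ = (c : ℂ))
    (R1 : ℝ) (hR1 : IsGreatest (Set.range fun i => q i * (⟪F i, G i⟫_ℂ).re) R1)
    (hzeta : ∃! i, q i * (⟪F i, G i⟫_ℂ).re = R1)
    (M : ℝ)
    (hM : IsGreatest
      {x | ∃ i, q i * (⟪F i, G i⟫_ℂ).re ≠ R1 ∧ x = q i * (⟪F i, G i⟫_ℂ).re} M)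
    (E : Fin N → Fin N → (H →L[ℂ] H))
    (hE : ∀ i j (f : H),
      E i j f = ((q i : ℂ) * ⟪F i, f⟫_ℂ) • G i + ((q j : ℂ) * ⟪F j, f⟫_ℂ) • G j) :
    (⨆ i, ⨆ j, ⨆ (_ : i ≠ j), spectralRadius ℂ (E i j)) =
      ENNReal.ofReal ((R1 + M + Real.sqrt ((R1 - M) ^ 2 + 4 * c)) / 2) := by
  have hq0 : ∀ i, 0 ≤ q i := by
    intro i
    rw [hq]
    have h2 : (2 : ℝ) ≤ N := by exact_mod_cast hN
    have h3 := hp1 i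
    exact div_nonneg (by linarith) (mul_nonneg (Nat.cast_nonneg n) (by linarith))
  have hdiag : ∀ i, (q i : ℂ) * ⟪F i, G i⟫_ℂ = ((q i * (⟪F i, G i⟫_ℂ).re : ℝ) : ℂ) := by
    intro i
    obtain ⟨r, -, hr⟩ := hreal i
    rw [hr, Complex.ofReal_re, Complex.ofReal_mul]
  have hdiag0 : ∀ i, 0 ≤ q i * (⟪F i, G i⟫_ℂ).re := by
    intro i
    obtain ⟨r, hr0, hr⟩ := hreal i
    rw [hr, Complex.ofReal_re]
    exact mul_nonneg (hq0 i) hr0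
  have hrad : ∀ i j, i ≠ j → spectralRadius ℂ (E i j) = ENNReal.ofReal
      (pairRoot (q i * (⟪F i, G i⟫_ℂ).re) (q j * (⟪F j, G j⟫_ℂ).re) c) := by
    intro i j hij
    refine spectralRadius_rank_two (E i j) (q i) (q j) (F i) (F j) (G i) (G j) (hE i j)
      (hdiag0 i) (hdiag0 j) hcpos (hdiag i) (hdiag j) ?_
    rw [← hoff i j hij]
    push_cast
    ring
  obtain ⟨i₀, hi₀, huniq⟩ := hzeta
  change _ = ENNReal.ofReal (pairRoot R1 M c)
  apply le_antisymm
  · refine iSup_le fun i => iSup_le fun j => iSup_le fun hij => ?_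
    rw [hrad i j hij]
    apply ENNReal.ofReal_le_ofReal
    have hR : ∀ k, q k * (⟪F k, G k⟫_ℂ).re ≤ R1 := fun k => hR1.2 ⟨k, rfl⟩
    by_cases hj : q j * (⟪F j, G j⟫_ℂ).re = R1
    · have hi : q i * (⟪F i, G i⟫_ℂ).re ≠ R1 := fun hi => hij ((huniq i hi).trans (huniq j hj).symm)
      rw [pairRoot_comm]
      exact pairRoot_mono (hR j) (hM.2 ⟨i, hi, rfl⟩) hcpos
    · exact pairRoot_mono (hR i) (hM.2 ⟨j, hj, rfl⟩) hcpos
  · obtain ⟨j₀, hj₀, hMj⟩ := hM.1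
    have hne : i₀ ≠ j₀ := fun h => hj₀ (h ▸ hi₀)
    refine le_trans (le_of_eq ?_) (le_iSup_of_le i₀ (le_iSup_of_le j₀
      (le_iSup (fun _ : i₀ ≠ j₀ => spectralRadius ℂ (E i₀ j₀)) hne)))
    rw [hrad i₀ j₀ hne, hMj]
    exact congrArg (fun r => ENNReal.ofReal (pairRoot r _ c)) hi₀.symm
end

section
/- Let F = (f_1, …, f_N) be a frame (N ≥ 2) for an n-dimensional complex Hilbert space H with frame operator S_F, and let (q_i) be the weight numbers of a probability sequence, with n − ∑_{k=1}^N 1/q_k² > 0. Set c₀ = max_{1 ≤ i ≤ N} q_i ⟨S_F^{-1} f_i, f_i⟩, Υ_1 = { i : q_i ⟨S_F^{-1} f_i, f_i⟩ = c₀ }, Υ_2 = {1, …, N} \ Υ_1, and H_j = span{ f_i : i ∈ Υ_j }. Assume: H_1 ∩ H_2 = {0}; Υ_1 has at least two elements; and q_i q_j |⟨S_F^{-1} f_i, f_j⟩|² = (n − ∑_{k=1}^N 1/q_k²) / (∑_{r ≠ s} 1/(q_r q_s)) for all i ≠ j. Then the canonical dual S_F^{-1}F is a 2-erasure probabilistic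 spectrally optimal dual of F; that is, S_F^{-1}F minimizes R_1^p(F,·) among all duals of F, and for every dual G of F that minimizes R_1^p(F,·) among all duals of F, one has R_2^p(F, S_F^{-1}F) ≤ R_2^p(F, G). -/
/-!
The weights satisfy `∑ 1 / q i = n`, and every dual `G` satisfies `∑ ⟪F i, G i⟫ = n`, the trace of
the identity (`dual_trace`).

The separation hypothesis forces `⟪F j, S⁻¹ F i⟫ = 0` whenever `i ∈ Υ₁` and `j ∉ Υ₁`
(`cross_eq_zero`), while the off-diagonal hypothesis makes all these numbers nonzero. Hence
`Υ₁` is the whole index set, and comparing the two sums gives `q i ⟪F i, S⁻¹ F i⟫ = 1` for all `i`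
(`canonical_diag`). By the trace identity every dual has `R₁ ≥ 1`, and `R₁ ≤ 1` forces
`⟪F i, G i⟫ = 1 / q i` for all `i`.

For a dual with this diagonal, put `w i j = q i q j ⟪F i, G j⟫ ⟪F j, G i⟫`. The nonzero eigenvalues
`μ` of the two-erasure operator satisfy `(μ - 1) ^ 2 = w i j`. For the canonical dual
`w i j = κ > 0` is constant, so `R₂ ≤ 1 + √κ`. The matrix `(⟪F i, G j⟫)` is
idempotent, so `∑_{i, j} ⟪F i, G j⟫ ⟪F j, G i⟫ = n`; hence the average of `w i j` with weights
`1 / (q i q j)`, over pairs `i ≠ j`, is also `κ`. Some pair then has `Re (w i j) ≥ κ`, and `w i j`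
has a square root `s` with `Re s ≥ √κ`, so the eigenvalue `1 + s` has modulus at least `1 + √κ`.
-/

open scoped InnerProductSpace ENNReal

variable {H : Type*} [NormedAddCommGroup H] [InnerProductSpace ℂ H]

/-- The two-erasure error operator `f ↦ q i ⟨f, f i⟩ g i + q j ⟨f, f j⟩ g j`
(paper's `⟨x, y⟩`, linear in the first argument, is Mathlib's `⟪y, x⟫_ℂ`). -/
noncomputable def errOp {N : ℕ} (q : Fin N → ℝ) (F G : Fin N → H) (i j : Fin N) :
    H →L[ℂ] H :=
  (q i : ℂ) • (innerSL ℂ (F i)).smulRight (G i) +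
    (q j : ℂ) • (innerSL ℂ (F j)).smulRight (G j)

/-- `R₂ᵖ(F,G) = max_{i ≠ j} ρ(errOp q F G i j)`, as a supremum in `ℝ≥0∞`. -/
noncomputable def R2p {N : ℕ} (q : Fin N → ℝ) (F G : Fin N → H) : ℝ≥0∞ :=
  ⨆ i, ⨆ j, ⨆ (_ : i ≠ j), spectralRadius ℂ (errOp q F G i j)

theorem errOp_apply {N : ℕ} (q : Fin N → ℝ) (F G : Fin N → H) (i j : Fin N) (x : H) :
    errOp q F G i j x = ((q i : ℂ) * ⟪F i, x⟫_ℂ) • G i + ((q j : ℂ) * ⟪F j, x⟫_ℂ) • G j := by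
  simp only [mul_smul]
  simp [errOp]

/-! ### Trace identities and the canonical dual -/

/-- The trace of the identity, computed from the reconstruction formula of a dual. -/
theorem dual_trace {n N : ℕ} [FiniteDimensional ℂ H] (hdim : Module.finrank ℂ H = n)
    {F G : Fin N → H} (hG : ∀ f : H, ∑ i, ⟪F i, f⟫_ℂ • G i = f) :
    ∑ i, ⟪F i, G i⟫_ℂ = n := by
  let b := stdOrthonormalBasis ℂ H
  calc ∑ i, ⟪F i, G i⟫_ℂ = ∑ i, ∑ k, ⟪F i, b k⟫_ℂ * ⟪b k, G i⟫_ℂ := by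
        simp [b.sum_inner_mul_inner]
    _ = ∑ k, ⟪b k, ∑ i, ⟪F i, b k⟫_ℂ • G i⟫_ℂ := by
        rw [Finset.sum_comm]
        simp only [inner_sum, inner_smul_right]
    _ = n := by
        simp [hG, hdim]

/-- The cross Gram matrix of a frame and a dual is idempotent, so its square has trace `n`. -/
theorem dual_trace_sq {n N : ℕ} [FiniteDimensional ℂ H] (hdim : Module.finrank ℂ H = n)
    {F G : Fin N → H} (hG : ∀ f : H, ∑ i, ⟪F i, f⟫_ℂ • G i = f) :
    ∑ i, ∑ j, ⟪F i, G j⟫_ℂ * ⟪F j, G i⟫_ℂ = n := by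
  rw [← dual_trace hdim hG]
  refine Finset.sum_congr rfl fun i _ => ?_
  conv_rhs => rw [← hG (G i), inner_sum]
  simp only [inner_smul_right]
  exact Finset.sum_congr rfl fun j _ => mul_comm _ _

theorem sinv_symm {N : ℕ} {F : Fin N → H} {S Sinv : H →ₗ[ℂ] H}
    (hS : ∀ f : H, S f = ∑ i, ⟪F i, f⟫_ℂ • F i)
    (hSinv : ∀ f : H, S (Sinv f) = f ∧ Sinv (S f) = f) (x y : H) :
    ⟪Sinv x, y⟫_ℂ = ⟪x, Sinv y⟫_ℂ := by
  conv_lhs => rw [← (hSinv y).1]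
  conv_rhs => rw [← (hSinv x).1]
  rw [hS, hS]
  simp only [inner_sum, sum_inner, inner_smul_right, inner_smul_left, inner_conj_symm]
  exact Finset.sum_congr rfl fun j _ => mul_comm _ _

theorem inner_sinv_self_im {N : ℕ} {F : Fin N → H} {S Sinv : H →ₗ[ℂ] H}
    (hS : ∀ f : H, S f = ∑ i, ⟪F i, f⟫_ℂ • F i)
    (hSinv : ∀ f : H, S (Sinv f) = f ∧ Sinv (S f) = f) (x : H) :
    (⟪x, Sinv x⟫_ℂ).im = 0 := by
  rw [← Complex.conj_eq_iff_im, inner_conj_symm, sinv_symm hS hSinv]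

theorem sinv_dual {N : ℕ} {F : Fin N → H} {S Sinv : H →ₗ[ℂ] H}
    (hS : ∀ f : H, S f = ∑ i, ⟪F i, f⟫_ℂ • F i)
    (hSinv : ∀ f : H, S (Sinv f) = f ∧ Sinv (S f) = f) (f : H) :
    ∑ i, ⟪F i, f⟫_ℂ • Sinv (F i) = f := by
  conv_rhs => rw [← (hSinv f).2, hS]
  simp

/-- If the frame splits into two parts with independent spans, the two parts are orthogonal for the
form `⟪·, S⁻¹ ·⟫`. -/
theorem cross_eq_zero {N : ℕ} {F : Fin N → H} {S Sinv : H →ₗ[ℂ] H}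
    (hS : ∀ f : H, S f = ∑ i, ⟪F i, f⟫_ℂ • F i)
    (hSinv : ∀ f : H, S (Sinv f) = f ∧ Sinv (S f) = f) (P : Fin N → Prop)
    (hsep : Submodule.span ℂ (F '' {i | P i}) ⊓ Submodule.span ℂ (F '' {i | ¬ P i}) = ⊥)
    {i j : Fin N} (hi : P i) (hj : ¬ P j) : ⟪F j, Sinv (F i)⟫_ℂ = 0 := by
  classical
  set y := ∑ k with ¬ P k, ⟪F k, Sinv (F i)⟫_ℂ • F k with hy
  have hsum : ∑ k with P k, ⟪F k, Sinv (F i)⟫_ℂ • F k + y = F i := by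
    rw [hy, Finset.sum_filter_add_sum_filter_not, ← hS, (hSinv _).1]
  have h2 : y ∈ Submodule.span ℂ (F '' {i | ¬ P i}) :=
    Submodule.sum_mem _ fun k hk => Submodule.smul_mem _ _
      (Submodule.subset_span ⟨k, (Finset.mem_filter.mp hk).2, rfl⟩)
  have h1 : y ∈ Submodule.span ℂ (F '' {i | P i}) := by
    rw [← eq_sub_iff_add_eq'] at hsum
    rw [hsum]
    refine Submodule.sub_mem _ (Submodule.subset_span ⟨i, hi, rfl⟩) ?_
    exact Submodule.sum_mem _ fun k hk => Submodule.smul_mem _ _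
      (Submodule.subset_span ⟨k, (Finset.mem_filter.mp hk).2, rfl⟩)
  have h0 : y = 0 := by
    rw [← Submodule.mem_bot ℂ, ← hsep]
    exact ⟨h1, h2⟩
  -- pairing `y` with `S⁻¹ F i` gives a vanishing sum of squared moduli
  have h3 : ∑ k with ¬ P k, ‖⟪F k, Sinv (F i)⟫_ℂ‖ ^ 2 = 0 := by
    have : ⟪Sinv (F i), y⟫_ℂ = 0 := by rw [h0, inner_zero_right]
    rw [hy, inner_sum] at this
    have h4 : ∀ k, ⟪Sinv (F i), ⟪F k, Sinv (F i)⟫_ℂ • F k⟫_ℂ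
        = ((‖⟪F k, Sinv (F i)⟫_ℂ‖ ^ 2 : ℝ) : ℂ) := fun k => by
      rw [inner_smul_right, ← inner_conj_symm (Sinv (F i)) (F k), Complex.mul_conj']
      push_cast; rfl
    simp only [h4] at this
    exact_mod_cast this
  have h5 := (Finset.sum_eq_zero_iff_of_nonneg fun k _ => by positivity).mp h3 j
    (Finset.mem_filter.mpr ⟨Finset.mem_univ _, hj⟩)
  simpa using h5

/-! ### Spectrum of the two-erasure operator -/

/-- A number whose real part is at least `κ` has a square root whose real part is at least `√κ`. -/
theorem exists_sq_re_ge {κ : ℝ} (w : ℂ) (hw : κ ≤ w.re) :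
    ∃ s : ℂ, s ^ 2 = w ∧ √κ ≤ s.re := by
  obtain ⟨s, hs⟩ := IsAlgClosed.exists_pow_nat_eq w (n := 2) two_pos
  have key : √κ ≤ |s.re| := by
    rw [← Real.sqrt_sq_eq_abs]
    apply Real.sqrt_le_sqrt
    have : w.re = s.re ^ 2 - s.im ^ 2 := by rw [← hs, sq, Complex.mul_re]; ring
    nlinarith [sq_nonneg s.im]
  rcases abs_cases s.re with h | h
  · exact ⟨s, hs, by linarith⟩
  · exact ⟨-s, by rw [neg_sq, hs], by rw [Complex.neg_re]; linarith⟩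

theorem mem_spectrum_of_eigenvector {E : H →L[ℂ] H} {μ : ℂ} {v : H} (hv : v ≠ 0)
    (h : E v = μ • v) : μ ∈ spectrum ℂ E := by
  rw [spectrum.mem_iff]
  rintro ⟨u, hu⟩
  apply hv
  have h1 : (↑u⁻¹ * ↑u : H →L[ℂ] H) v = v := by simp
  rw [← h1, hu]
  simp [Algebra.algebraMap_eq_smul_one, h]

theorem exists_eigenvector [FiniteDimensional ℂ H] {E : H →L[ℂ] H} {μ : ℂ}
    (h : μ ∈ spectrum ℂ E) : ∃ v : H, v ≠ 0 ∧ E v = μ • v := by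
  by_contra! hc
  have : CompleteSpace H := FiniteDimensional.complete ℂ H
  rw [spectrum.mem_iff] at h
  apply h
  rw [ContinuousLinearMap.isUnit_iff_bijective]
  have hinj : Function.Injective
      ((algebraMap ℂ (H →L[ℂ] H) μ - E : H →L[ℂ] H) : H →ₗ[ℂ] H) := by
    rw [← LinearMap.ker_eq_bot, LinearMap.ker_eq_bot']
    intro v hv
    by_contra hne
    refine hc v hne ?_
    have hv' : μ • v - E v = 0 := by
      simpa [Algebra.algebraMap_eq_smul_one] using hv
    exact (sub_eq_zero.mp hv').symm
  exact ⟨hinj, LinearMap.injective_iff_surjective.mp hinj⟩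

/-- When both diagonal entries equal `1`, every `1 + s ≠ 0` with
`s ^ 2 = q i q j ⟪F i, G j⟫ ⟪F j, G i⟫ ≠ 0` is an eigenvalue of the two-erasure operator. -/
theorem le_spectralRadius_errOp {N : ℕ} {q : Fin N → ℝ} {F G : Fin N → H} {i j : Fin N}
    (hi : (q i : ℂ) * ⟪F i, G i⟫_ℂ = 1) (hj : (q j : ℂ) * ⟪F j, G j⟫_ℂ = 1) {s : ℂ}
    (hs : s ^ 2 = q i * q j * (⟪F i, G j⟫_ℂ * ⟪F j, G i⟫_ℂ)) (hs0 : s ≠ 0) (hs1 : 1 + s ≠ 0) :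
    (‖1 + s‖₊ : ℝ≥0∞) ≤ spectralRadius ℂ (errOp q F G i j) := by
  have hB : (q i : ℂ) * ⟪F i, G j⟫_ℂ ≠ 0 := by
    intro h
    apply hs0
    have : s ^ 2 = 0 := by rw [hs]; linear_combination (q j * ⟪F j, G i⟫_ℂ) * h
    simpa using this
  -- an eigenvector, with `q i ⟪F i, G j⟫` and `s` as its coordinates along `G i` and `G j`
  set v := ((q i : ℂ) * ⟪F i, G j⟫_ℂ) • G i + s • G j with hv
  have hFi : (q i : ℂ) * ⟪F i, v⟫_ℂ = (1 + s) * (q i * ⟪F i, G j⟫_ℂ) := by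
    rw [hv, inner_add_right, inner_smul_right, inner_smul_right]
    linear_combination (q i * ⟪F i, G j⟫_ℂ) * hi
  have hFj : (q j : ℂ) * ⟪F j, v⟫_ℂ = (1 + s) * s := by
    rw [hv, inner_add_right, inner_smul_right, inner_smul_right]
    linear_combination s * hj - hs
  have hv0 : v ≠ 0 := by
    intro h
    rw [h, inner_zero_right, mul_zero] at hFi
    exact mul_ne_zero hs1 hB hFi.symm
  have hmem : 1 + s ∈ spectrum ℂ (errOp q F G i j) := by
    refine mem_spectrum_of_eigenvector hv0 ?_
    rw [errOp_apply, hFi, hFj, hv, smul_add, smul_smul, smul_smul]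
  exact le_iSup₂ (f := fun (k : ℂ) (_ : k ∈ spectrum ℂ (errOp q F G i j)) => (‖k‖₊ : ℝ≥0∞)) _ hmem

/-- When both diagonal entries equal `1`, every nonzero eigenvalue `μ` satisfies
`(μ - 1) ^ 2 = q i q j ⟪F i, G j⟫ ⟪F j, G i⟫`, so the spectral radius is at most `1 + √κ`, where `κ`
is the modulus of the right-hand side. -/
theorem spectralRadius_errOp_le [FiniteDimensional ℂ H] {N : ℕ} {q : Fin N → ℝ}
    {F G : Fin N → H} {i j : Fin N} {κ : ℝ}
    (hi : (q i : ℂ) * ⟪F i, G i⟫_ℂ = 1) (hj : (q j : ℂ) * ⟪F j, G j⟫_ℂ = 1)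
    (hκ : ‖(q i * q j * (⟪F i, G j⟫_ℂ * ⟪F j, G i⟫_ℂ) : ℂ)‖ = κ) :
    spectralRadius ℂ (errOp q F G i j) ≤ ENNReal.ofReal (1 + √κ) := by
  refine iSup₂_le fun μ hμ => ?_
  rw [← enorm_eq_nnnorm, ← ofReal_norm]
  apply ENNReal.ofReal_le_ofReal
  by_cases hμ0 : μ = 0
  · rw [hμ0, norm_zero]; positivity
  obtain ⟨v, hv0, hv⟩ := exists_eigenvector hμ
  rw [errOp_apply] at hv
  have ha := congrArg (fun x => ⟪F i, x⟫_ℂ) hv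
  have hb := congrArg (fun x => ⟪F j, x⟫_ℂ) hv
  simp only [inner_add_right, inner_smul_right] at ha hb
  set a := ⟪F i, v⟫_ℂ
  set b := ⟪F j, v⟫_ℂ
  set B := ⟪F i, G j⟫_ℂ
  set C := ⟪F j, G i⟫_ℂ
  have ha' : (μ - 1) * a = q j * B * b := by linear_combination a * hi - ha
  have hb' : (μ - 1) * b = q i * C * a := by linear_combination b * hj - hb
  have hsq : (μ - 1) ^ 2 = q i * q j * (B * C) := by
    by_cases h0 : a = 0
    · by_cases h1 : b = 0
      · exfalso
        rw [h0, h1] at hv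
        simp only [mul_zero, zero_smul, add_zero] at hv
        exact smul_ne_zero hμ0 hv0 hv.symm
      · apply mul_right_cancel₀ h1
        linear_combination (μ - 1) * hb' + q i * C * ha'
    · apply mul_right_cancel₀ h0
      linear_combination (μ - 1) * ha' + q j * B * hb'
  have hn : ‖μ - 1‖ = √κ := by
    rw [← hκ, ← hsq, norm_pow, Real.sqrt_sq (norm_nonneg _)]
  calc ‖μ‖ = ‖1 + (μ - 1)‖ := by rw [add_sub_cancel]
    _ ≤ ‖(1 : ℂ)‖ + ‖μ - 1‖ := norm_add_le _ _
    _ = 1 + √κ := by rw [hn, norm_one]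

/-! ### Weights and diagonal entries -/

theorem weights_pos {n N : ℕ} (hn : 1 ≤ n) (hN : 2 ≤ N) {p q : Fin N → ℝ} (hp1 : ∀ i, p i < 1)
    (hq : ∀ i, q i = ((N : ℝ) - 1) / ((n : ℝ) * (1 - p i))) (i : Fin N) : 0 < q i := by
  rw [hq]
  have h1 : (2 : ℝ) ≤ N := by exact_mod_cast hN
  have h2 : (1 : ℝ) ≤ n := by exact_mod_cast hn
  have := hp1 i
  exact div_pos (by linarith) (mul_pos (by linarith) (by linarith))

theorem weights_sum {n N : ℕ} (hN : 2 ≤ N) {p q : Fin N → ℝ}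
    (hpsum : ∑ i, p i = 1)
    (hq : ∀ i, q i = ((N : ℝ) - 1) / ((n : ℝ) * (1 - p i))) : ∑ i, 1 / q i = n := by
  have h1 : (2 : ℝ) ≤ N := by exact_mod_cast hN
  have h3 : (N : ℝ) - 1 ≠ 0 := by linarith
  simp only [hq, one_div_div]
  rw [← Finset.sum_div, ← Finset.mul_sum, Finset.sum_sub_distrib, hpsum]
  simp
  field_simp

/-- A dual whose diagonal entries have modulus at most `1 / q i` has diagonal entries equal to
`1 / q i`, since both families sum to `n`. -/
theorem diag_eq_one {n N : ℕ} {q : Fin N → ℝ} (hq0 : ∀ i, 0 < q i) (hqs : ∑ i, 1 / q i = n)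
    {z : Fin N → ℂ} (hz : ∑ i, z i = n) (hle : ∀ i, q i * ‖z i‖ ≤ 1) (i : Fin N) :
    (q i : ℂ) * z i = 1 := by
  have hle' : ∀ k, ‖z k‖ ≤ 1 / q k := fun k => by
    rw [le_div_iff₀ (hq0 k), mul_comm]; exact hle k
  have hre : ∑ k, (z k).re = ∑ k, 1 / q k := by
    rw [hqs, ← Complex.re_sum, hz, Complex.natCast_re]
  have heq := (Finset.sum_eq_sum_iff_of_le
    fun k _ => (Complex.re_le_norm (z k)).trans (hle' k)).mp hre i (Finset.mem_univ _)
  have him : (z i).im = 0 := by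
    have h1 := Complex.sq_norm_sub_sq_re (z i)
    have h2 := hle' i
    have h3 := norm_nonneg (z i)
    rw [← heq] at h2
    have h4 : (z i).im ^ 2 ≤ 0 := by nlinarith
    exact pow_eq_zero_iff two_ne_zero |>.mp (le_antisymm h4 (sq_nonneg _))
  have hzi : z i = ((1 / q i : ℝ) : ℂ) := Complex.ext (by simpa using heq) (by simpa using him)
  rw [hzi, ← Complex.ofReal_mul, mul_one_div_cancel (hq0 i).ne', Complex.ofReal_one]

theorem sum_offdiag_pos {N : ℕ} (hN : 2 ≤ N) {q : Fin N → ℝ} (hq0 : ∀ i, 0 < q i) :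
    0 < ∑ r, ∑ s, if s ≠ r then 1 / (q r * q s) else 0 := by
  have hnn : ∀ r s, 0 ≤ if s ≠ r then 1 / (q r * q s) else 0 := fun r s => by
    have := hq0 r
    have := hq0 s
    split_ifs <;> positivity
  refine Finset.sum_pos' (fun r _ => Finset.sum_nonneg fun s _ => hnn r s)
    ⟨⟨0, by omega⟩, Finset.mem_univ _, Finset.sum_pos' (fun s _ => hnn _ s)
      ⟨⟨1, by omega⟩, Finset.mem_univ _, ?_⟩⟩
  have := hq0 ⟨0, by omega⟩
  have := hq0 ⟨1, by omega⟩
  rw [if_pos (by simp [Fin.ext_iff])]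
  positivity

/-! ### Averaging over pairs of erasures -/

/-- If the diagonal of the cross Gram matrix is `1 / q i`, the off-diagonal products
`q i q j ⟪F i, G j⟫ ⟪F j, G i⟫` have weighted average `β / ∑_{r ≠ s} 1 / (q r q s)`, so one of them
has at least this real part. -/
theorem exists_re_ge {n N : ℕ} [FiniteDimensional ℂ H] (hdim : Module.finrank ℂ H = n)
    (hN : 2 ≤ N) {q : Fin N → ℝ} (hq0 : ∀ i, 0 < q i)
    {F G : Fin N → H} (hG : ∀ f : H, ∑ i, ⟪F i, f⟫_ℂ • G i = f)
    (hd : ∀ i, (q i : ℂ) * ⟪F i, G i⟫_ℂ = 1) :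
    ∃ i j, i ≠ j ∧ ((n : ℝ) - ∑ k, 1 / (q k) ^ 2) /
        (∑ r, ∑ s, if s ≠ r then 1 / (q r * q s) else 0) ≤
      ((q i : ℂ) * q j * (⟪F i, G j⟫_ℂ * ⟪F j, G i⟫_ℂ)).re := by
  classical
  set D := ∑ r, ∑ s, if s ≠ r then 1 / (q r * q s) else 0 with hD
  have hDpos : 0 < D := sum_offdiag_pos hN hq0
  set κ := ((n : ℝ) - ∑ k, 1 / (q k) ^ 2) / D with hκ
  by_contra! hlt
  set t : Fin N → Fin N → ℝ := fun i j => (⟪F i, G j⟫_ℂ * ⟪F j, G i⟫_ℂ).re with ht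
  have hlt' : ∀ i j, i ≠ j → t i j < κ * (1 / (q i * q j)) := fun i j hij => by
    have h1 := hlt i j hij
    rw [← Complex.ofReal_mul, Complex.re_ofReal_mul] at h1
    have h2 := mul_pos (hq0 i) (hq0 j)
    rw [mul_one_div, lt_div_iff₀ h2, mul_comm]
    exact h1
  have hdiag : ∀ i, t i i = 1 / q i ^ 2 := fun i => by
    have h2 : (q i : ℂ) ≠ 0 := by exact_mod_cast (hq0 i).ne'
    have h1 : ⟪F i, G i⟫_ℂ = ((1 / q i : ℝ) : ℂ) := by
      push_cast
      rw [eq_div_iff h2, mul_comm]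
      exact hd i
    rw [ht]
    simp only [h1]
    rw [← Complex.ofReal_mul, Complex.ofReal_re]
    ring
  have htot : ∑ i, ∑ j, t i j = n := by
    have := congrArg Complex.re (dual_trace_sq hdim hG)
    simpa only [Complex.re_sum, Complex.natCast_re] using this
  have hle : ∀ i j, t i j ≤
      (if j = i then 1 / q i ^ 2 else 0) + κ * (if j ≠ i then 1 / (q i * q j) else 0) := by
    intro i j
    by_cases h : j = i
    · subst h; simp [hdiag]
    · simpa [h] using (hlt' i j (Ne.symm h)).le
  have hrow : ∀ i : Fin N, ∃ j, j ≠ i := fun i => by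
    have : Nontrivial (Fin N) := Fin.nontrivial_iff_two_le.mpr hN
    exact exists_ne i
  have hsum : ∑ i, ∑ j, t i j < ∑ i, ∑ j, ((if j = i then 1 / q i ^ 2 else 0) +
      κ * (if j ≠ i then 1 / (q i * q j) else 0)) := by
    refine Finset.sum_lt_sum_of_nonempty ⟨⟨0, by omega⟩, Finset.mem_univ _⟩ fun i _ => ?_
    obtain ⟨j, hj⟩ := hrow i
    refine Finset.sum_lt_sum (fun j _ => hle i j) ⟨j, Finset.mem_univ _, ?_⟩
    simpa [hj] using hlt' i j (Ne.symm hj)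
  have hval : ∑ i, ∑ j, ((if j = i then 1 / q i ^ 2 else 0) +
      κ * (if j ≠ i then 1 / (q i * q j) else 0)) = n := by
    simp only [Finset.sum_add_distrib, ← Finset.mul_sum]
    rw [← hD, hκ, div_mul_cancel₀ _ hDpos.ne']
    simp
  rw [htot, hval] at hsum
  exact lt_irrefl _ hsum

/-! ### The diagonal of the canonical dual -/

/-- The hypotheses of the theorem force `q i ⟪F i, S⁻¹ F i⟫ = 1` for every `i`: nonvanishing cross
terms leave no index outside the maximal set, and then the trace determines the common value. -/
theorem canonical_diag {n N : ℕ} [FiniteDimensional ℂ H] (hn : 1 ≤ n)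
    (hdim : Module.finrank ℂ H = n) {q : Fin N → ℝ} (hq0 : ∀ i, 0 < q i)
    (hqs : ∑ i, 1 / q i = n) {F : Fin N → H} {S Sinv : H →ₗ[ℂ] H}
    (hS : ∀ f : H, S f = ∑ i, ⟪F i, f⟫_ℂ • F i)
    (hSinv : ∀ f : H, S (Sinv f) = f ∧ Sinv (S f) = f) {c0 : ℝ}
    (hY1 : ∃ i, q i * (⟪F i, Sinv (F i)⟫_ℂ).re = c0)
    (hsep : Submodule.span ℂ (F '' {i | q i * (⟪F i, Sinv (F i)⟫_ℂ).re = c0}) ⊓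
        Submodule.span ℂ (F '' {i | q i * (⟪F i, Sinv (F i)⟫_ℂ).re ≠ c0}) = ⊥)
    (hcross : ∀ i j, i ≠ j → ⟪F j, Sinv (F i)⟫_ℂ ≠ 0) (i : Fin N) :
    (q i : ℂ) * ⟪F i, Sinv (F i)⟫_ℂ = 1 := by
  have hall : ∀ j, q j * (⟪F j, Sinv (F j)⟫_ℂ).re = c0 := by
    obtain ⟨i, hi⟩ := hY1
    intro j
    by_contra hj
    have hij : i ≠ j := by rintro rfl; exact hj hi
    exact hcross i j hij (cross_eq_zero hS hSinv
      (fun i => q i * (⟪F i, Sinv (F i)⟫_ℂ).re = c0) hsep hi hj)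
  have hz : ∀ j, ⟪F j, Sinv (F j)⟫_ℂ = ((c0 * (1 / q j) : ℝ) : ℂ) := fun j => by
    apply Complex.ext
    · rw [Complex.ofReal_re, ← hall j]
      have := (hq0 j).ne'
      field_simp
    · rw [Complex.ofReal_im, inner_sinv_self_im hS hSinv]
  have hc : c0 = 1 := by
    have h1 := dual_trace hdim (sinv_dual hS hSinv)
    simp only [hz] at h1
    rw [← Complex.ofReal_sum, ← Finset.mul_sum, hqs] at h1
    have h2 : c0 * (n : ℝ) = n := by exact_mod_cast h1
    have h3 : (n : ℝ) ≠ 0 := by exact_mod_cast (by omega : n ≠ 0)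
    exact mul_eq_right₀ h3 |>.mp h2
  rw [hz, hc, ← Complex.ofReal_mul, one_mul, mul_one_div_cancel (hq0 i).ne', Complex.ofReal_one]

/-! ### Optimality of the canonical dual -/

/-- Under the stated hypotheses (positive `β = n − ∑ 1/q k²`, the maximal set
`Υ₁` of the quantities `q i ⟨S⁻¹ f i, f i⟩` having at least two elements, the spans of the
frame vectors indexed by `Υ₁` and by its complement intersecting trivially, and the
off-diagonal condition `q i q j |⟨S⁻¹ f i, f j⟩|² = β / (∑_{r ≠ s} 1/(q r q s))`), the
canonical dual `S⁻¹F` is a 2-erasure probabilistic spectrally optimal dual of the frame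
`F`: it minimizes `R₁ᵖ(F,·) = max_i q i |⟨f i, g i⟩|` among all duals of `F`, and for every
dual `G` of `F` minimizing `R₁ᵖ(F,·)` one has `R₂ᵖ(F, S⁻¹F) ≤ R₂ᵖ(F, G)`. -/
theorem canonical_dual_two_erasure_spectrally_optimal {n N : ℕ}
    [FiniteDimensional ℂ H]
    (hn : 1 ≤ n) (hdim : Module.finrank ℂ H = n) (hN : 2 ≤ N)
    (p : Fin N → ℝ) (hp0 : ∀ i, 0 ≤ p i) (hp1 : ∀ i, p i < 1) (hpsum : ∑ i, p i = 1)
    (q : Fin N → ℝ) (hq : ∀ i, q i = ((N : ℝ) - 1) / ((n : ℝ) * (1 - p i)))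
    (F : Fin N → H) (hspan : Submodule.span ℂ (Set.range F) = ⊤)
    (S Sinv : H →ₗ[ℂ] H)
    (hS : ∀ f : H, S f = ∑ i, ⟪F i, f⟫_ℂ • F i)
    (hSinv : ∀ f : H, S (Sinv f) = f ∧ Sinv (S f) = f)
    (hbeta : 0 < (n : ℝ) - ∑ k, 1 / (q k) ^ 2)
    (c0 : ℝ)
    (hc0 : IsGreatest (Set.range fun i => q i * (⟪F i, Sinv (F i)⟫_ℂ).re) c0)
    (hY1 : ∃ i j, i ≠ j ∧ q i * (⟪F i, Sinv (F i)⟫_ℂ).re = c0 ∧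
      q j * (⟪F j, Sinv (F j)⟫_ℂ).re = c0)
    (hsep : Submodule.span ℂ (F '' {i | q i * (⟪F i, Sinv (F i)⟫_ℂ).re = c0}) ⊓
        Submodule.span ℂ (F '' {i | q i * (⟪F i, Sinv (F i)⟫_ℂ).re ≠ c0}) = ⊥)
    (hcross : ∀ i j, i ≠ j → q i * q j * ‖⟪F j, Sinv (F i)⟫_ℂ‖ ^ 2 =
      ((n : ℝ) - ∑ k, 1 / (q k) ^ 2) /
        (∑ r, ∑ s, if s ≠ r then 1 / (q r * q s) else 0)) :
    (∀ G : Fin N → H, (∀ f : H, ∑ i, ⟪F i, f⟫_ℂ • G i = f) →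
      finMax (by omega) (fun i => q i * ‖⟪Sinv (F i), F i⟫_ℂ‖) ≤
        finMax (by omega) (fun i => q i * ‖⟪G i, F i⟫_ℂ‖)) ∧
    (∀ G : Fin N → H, (∀ f : H, ∑ i, ⟪F i, f⟫_ℂ • G i = f) →
      (∀ G' : Fin N → H, (∀ f : H, ∑ i, ⟪F i, f⟫_ℂ • G' i = f) →
        finMax (by omega) (fun i => q i * ‖⟪G i, F i⟫_ℂ‖) ≤
          finMax (by omega) (fun i => q i * ‖⟪G' i, F i⟫_ℂ‖)) →
      R2p q F (fun i => Sinv (F i)) ≤ R2p q F G) := by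
  have hq0 := weights_pos hn hN hp1 hq
  have hqs := weights_sum hN hpsum hq
  set κ := ((n : ℝ) - ∑ k, 1 / (q k) ^ 2) /
    (∑ r, ∑ s, if s ≠ r then 1 / (q r * q s) else 0) with hκ
  have hκ0 : 0 < κ := div_pos hbeta (sum_offdiag_pos hN hq0)
  have hne : ∀ i j, i ≠ j → ⟪F j, Sinv (F i)⟫_ℂ ≠ 0 := fun i j hij h => by
    have := hcross i j hij
    rw [h] at this
    simp at this
    exact hκ0.ne this
  have hcan : ∀ i, (q i : ℂ) * ⟪F i, Sinv (F i)⟫_ℂ = 1 :=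
    canonical_diag hn hdim hq0 hqs hS hSinv
      (hY1.imp fun i h => by obtain ⟨j, -, h, -⟩ := h; exact h) hsep hne
  have hR1can : finMax (by omega) (fun i => q i * ‖⟪Sinv (F i), F i⟫_ℂ‖) ≤ 1 := by
    refine Finset.sup'_le _ _ fun i _ => ?_
    have := congrArg norm (hcan i)
    rw [norm_mul, norm_one, Complex.norm_real, Real.norm_of_nonneg (hq0 i).le,
      norm_inner_symm] at this
    exact this.le
  have hbound : ∀ (G : Fin N → H) (c : ℝ),
      finMax (by omega) (fun i => q i * ‖⟪G i, F i⟫_ℂ‖) ≤ c →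
      ∀ i, q i * ‖⟪F i, G i⟫_ℂ‖ ≤ c := fun G c h i => by
    rw [norm_inner_symm]
    exact (Finset.le_sup' (fun i => q i * ‖⟪G i, F i⟫_ℂ‖) (Finset.mem_univ i)).trans h
  refine ⟨fun G hG => ?_, fun G hG hmin => ?_⟩
  · refine hR1can.trans ?_
    by_contra! hlt
    have h1 := diag_eq_one hq0 hqs (dual_trace hdim hG) (hbound G 1 hlt.le) ⟨0, by omega⟩
    have h2 := hbound G _ le_rfl ⟨0, by omega⟩
    have h3 := congrArg norm h1
    rw [norm_mul, norm_one, Complex.norm_real, Real.norm_of_nonneg (hq0 _).le] at h3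
    linarith
  · have hd := diag_eq_one hq0 hqs (dual_trace hdim hG)
      (hbound G 1 ((hmin _ (sinv_dual hS hSinv)).trans hR1can))
    trans ENNReal.ofReal (1 + √κ)
    · refine iSup_le fun i => iSup_le fun j => iSup_le fun hij => ?_
      refine spectralRadius_errOp_le (hcan i) (hcan j) ?_
      have h1 : ‖⟪F i, Sinv (F j)⟫_ℂ‖ = ‖⟪F j, Sinv (F i)⟫_ℂ‖ := by
        rw [norm_inner_symm, sinv_symm hS hSinv]
      rw [norm_mul, norm_mul, norm_mul, h1, Complex.norm_real, Complex.norm_real,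
        Real.norm_of_nonneg (hq0 _).le, Real.norm_of_nonneg (hq0 _).le, ← sq, hcross i j hij]
    · obtain ⟨i, j, hij, hw⟩ := exists_re_ge hdim hN hq0 hG hd
      obtain ⟨s, hs, hsre⟩ := exists_sq_re_ge _ hw
      have hpos : 0 < √κ := Real.sqrt_pos.mpr hκ0
      have hs0 : s ≠ 0 := by
        rintro rfl
        exact absurd hsre (not_le.mpr hpos)
      have hre : 1 + √κ ≤ (1 + s).re := by
        rw [Complex.add_re, Complex.one_re]
        gcongr
      have hs1 : 1 + s ≠ 0 := by
        intro h
        rw [h, Complex.zero_re] at hre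
        linarith
      calc ENNReal.ofReal (1 + √κ) ≤ ENNReal.ofReal ‖1 + s‖ :=
            ENNReal.ofReal_le_ofReal (hre.trans (Complex.re_le_norm _))
        _ = (‖1 + s‖₊ : ℝ≥0∞) := by rw [ofReal_norm, enorm_eq_nnnorm]
        _ ≤ spectralRadius ℂ (errOp q F G i j) :=
            le_spectralRadius_errOp (hd i) (hd j) hs hs0 hs1
        _ ≤ R2p q F G :=
            le_iSup_of_le i (le_iSup_of_le j (le_iSup_of_le hij le_rfl))
end

section
/- Let F = (f_1, …, f_N) be a frame for an n-dimensional complex Hilbert space H with frame operator S_F, and let (q_i) be the weight numbers of a probability sequence. Set c = max_{1 ≤ i ≤ N} q_i ‖f_i‖ ‖S_F^{-1} f_i‖, ϱ_1 = { i : q_i ‖f_i‖ ‖S_F^{-1} f_i‖ = c }, ϱ_2 = {1, …, N} \ ϱ_1, and H_j = span{ f_i : i ∈ ϱ_j } for j = 1, 2. If H_1 ∩ H_2 = {0}, then for every dual G of F one has max_{1 ≤ i ≤ N} q_i ‖f_i‖ ‖g_i‖ ≥ c = max_{1 ≤ i ≤ N} q_i ‖f_i‖ ‖S_F^{-1} f_i‖;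 that is, the canonical dual is a 1-erasure probabilistic optimal dual of F. -/
/-!
Write a dual as `g i = S⁻¹ (f i) + u i`; then `∑ i, ⟪f i, x⟫ • u i = 0` for all `x`.  Since
`H₁ ⊓ H₂ = ⊥`, the complements `H₁ᗮ` and `H₂ᗮ` together span `H`, so the part of this relation
over `ϱ₁` vanishes by itself (`sum_filter_smul_eq_zero`): it is trivial on `H₁ᗮ`, and on `H₂ᗮ` it
equals the full sum.  Taking a trace against `S⁻¹` gives `∑ i ∈ ϱ₁, ⟪S⁻¹ (f i), u i⟫ = 0`
(`sum_inner_map_eq_zero`).  If `q i ‖f i‖ ‖g i‖ < c` held for all `i`, then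
`‖S⁻¹ (f i) + u i‖ < ‖S⁻¹ (f i)‖`, hence `Re ⟪S⁻¹ (f i), u i⟫ < 0`, for every `i ∈ ϱ₁`; as `ϱ₁` is
nonempty this contradicts the vanishing sum.
-/

open scoped InnerProductSpace

/-- If the operator `x ↦ ∑ i ∈ s, ⟪F i, x⟫ • u i` is zero, then so is the trace of its composition
with `A†`, which is `∑ i ∈ s, ⟪A (F i), u i⟫`. -/
lemma sum_inner_map_eq_zero {H ι : Type*} [NormedAddCommGroup H] [InnerProductSpace ℂ H]
    [FiniteDimensional ℂ H] (s : Finset ι) (F u : ι → H) (A : H →ₗ[ℂ] H)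
    (h : ∀ x : H, ∑ i ∈ s, ⟪F i, x⟫_ℂ • u i = 0) :
    ∑ i ∈ s, ⟪A (F i), u i⟫_ℂ = 0 := by
  let b := stdOrthonormalBasis ℂ H
  calc ∑ i ∈ s, ⟪A (F i), u i⟫_ℂ
      = ∑ i ∈ s, ∑ k, ⟪F i, LinearMap.adjoint A (b k)⟫_ℂ * ⟪b k, u i⟫_ℂ := by
        refine Finset.sum_congr rfl fun i _ => ?_
        rw [← b.sum_inner_mul_inner]
        simp only [LinearMap.adjoint_inner_right]
    _ = ∑ k, ⟪b k, ∑ i ∈ s, ⟪F i, LinearMap.adjoint A (b k)⟫_ℂ • u i⟫_ℂ := by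
        rw [Finset.sum_comm]
        simp only [inner_sum, inner_smul_right]
    _ = 0 := by simp only [h, inner_zero_right, Finset.sum_const_zero]

/-- A linear relation `∑ i, ⟪F i, x⟫ • u i = 0` restricts to the indices satisfying `P` when the
spans of the `F i` with `P i` and of those with `¬ P i` meet trivially. -/
lemma sum_filter_smul_eq_zero {H ι : Type*} [NormedAddCommGroup H] [InnerProductSpace ℂ H]
    [FiniteDimensional ℂ H] [Fintype ι] (P : ι → Prop) [DecidablePred P] (F u : ι → H)
    (hsep : Submodule.span ℂ (F '' {i | P i}) ⊓ Submodule.span ℂ (F '' {i | ¬ P i}) = ⊥)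
    (h : ∀ x : H, ∑ i, ⟪F i, x⟫_ℂ • u i = 0) (x : H) :
    ∑ i with P i, ⟪F i, x⟫_ℂ • u i = 0 := by
  have htop : (Submodule.span ℂ (F '' {i | P i}))ᗮ ⊔ (Submodule.span ℂ (F '' {i | ¬ P i}))ᗮ = ⊤ := by
    rw [← Submodule.orthogonal_eq_bot_iff, ← Submodule.inf_orthogonal,
      Submodule.orthogonal_orthogonal, Submodule.orthogonal_orthogonal, hsep]
  have hx : x ∈ (Submodule.span ℂ (F '' {i | P i}))ᗮ ⊔
      (Submodule.span ℂ (F '' {i | ¬ P i}))ᗮ := htop ▸ Submodule.mem_top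
  obtain ⟨y, hy, z, hz, rfl⟩ := Submodule.mem_sup.1 hx
  have hy' : ∀ i, P i → ⟪F i, y⟫_ℂ = 0 := fun i hi =>
    (Submodule.mem_orthogonal _ _).1 hy _ (Submodule.subset_span ⟨i, hi, rfl⟩)
  have hz' : ∀ i, ¬ P i → ⟪F i, z⟫_ℂ = 0 := fun i hi =>
    (Submodule.mem_orthogonal _ _).1 hz _ (Submodule.subset_span ⟨i, hi, rfl⟩)
  rw [← h z, Finset.sum_filter]
  refine Finset.sum_congr rfl fun i _ => ?_
  split_ifs with hi
  · rw [inner_add_right, hy' i hi, zero_add]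
  · rw [hz' i hi, zero_smul]

/-- Let `F` be a frame (spanning family) for an `n`-dimensional complex
Hilbert space with frame operator `S` (inverse `Sinv`), and `q` the weight numbers of a
probability sequence.  Let `c = max_i q i ‖f i‖ ‖S⁻¹ f i‖`,
`ϱ₁ = {i : q i ‖f i‖ ‖S⁻¹ f i‖ = c}`, `ϱ₂` its complement, `H_j = span {f i : i ∈ ϱ_j}`.
If `H₁ ⊓ H₂ = ⊥`, then every dual `G` of `F` satisfies
`max_i q i ‖f i‖ ‖g i‖ ≥ c`, i.e. the canonical dual is a 1-erasure probabilistic optimal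
dual of `F`. -/
theorem canonical_dual_one_erasure_optimal {H : Type*} [NormedAddCommGroup H]
    [InnerProductSpace ℂ H] [FiniteDimensional ℂ H] {n N : ℕ}
    (hn : 1 ≤ n) (hdim : Module.finrank ℂ H = n)
    (p : Fin N → ℝ) (hp0 : ∀ i, 0 ≤ p i) (hp1 : ∀ i, p i < 1) (hpsum : ∑ i, p i = 1)
    (q : Fin N → ℝ) (hq : ∀ i, q i = ((N : ℝ) - 1) / ((n : ℝ) * (1 - p i)))
    (F : Fin N → H) (hspan : Submodule.span ℂ (Set.range F) = ⊤)
    (S Sinv : H →ₗ[ℂ] H)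
    (hS : ∀ f : H, S f = ∑ i, ⟪F i, f⟫_ℂ • F i)
    (hSinv : ∀ f : H, S (Sinv f) = f ∧ Sinv (S f) = f)
    (c : ℝ)
    (hc : IsGreatest (Set.range fun i => q i * ‖F i‖ * ‖Sinv (F i)‖) c)
    (hsep : Submodule.span ℂ (F '' {i | q i * ‖F i‖ * ‖Sinv (F i)‖ = c}) ⊓
        Submodule.span ℂ (F '' {i | q i * ‖F i‖ * ‖Sinv (F i)‖ ≠ c}) = ⊥) :
    ∀ G : Fin N → H, (∀ f : H, ∑ i, ⟪F i, f⟫_ℂ • G i = f) →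
      ∃ i, c ≤ q i * ‖F i‖ * ‖G i‖ := by
  intro G hG
  classical
  by_contra! hlt
  obtain ⟨⟨i₀, hi₀⟩, -⟩ := hc
  have hN : (1 : ℝ) ≤ N := by exact_mod_cast (Nat.zero_le _).trans_lt i₀.isLt
  have hq0 : ∀ i, 0 ≤ q i := fun i => by
    rw [hq i]
    have := hp1 i
    exact div_nonneg (by linarith) (mul_nonneg n.cast_nonneg (by linarith))
  have hrel : ∀ x : H, ∑ i, ⟪F i, x⟫_ℂ • (G i - Sinv (F i)) = 0 := fun x => by
    have hcan : ∑ i, ⟪F i, x⟫_ℂ • Sinv (F i) = x := by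
      simpa only [hS, map_sum, map_smul] using (hSinv x).2
    simp only [smul_sub, Finset.sum_sub_distrib, hG, hcan, sub_self]
  have htr := sum_inner_map_eq_zero _ F _ Sinv
    (sum_filter_smul_eq_zero (fun i => q i * ‖F i‖ * ‖Sinv (F i)‖ = c) F _ hsep hrel)
  have hneg : ∀ i ∈ Finset.univ.filter (fun i => q i * ‖F i‖ * ‖Sinv (F i)‖ = c),
      (⟪Sinv (F i), G i - Sinv (F i)⟫_ℂ).re < 0 := fun i hi => by
    have hi' : q i * ‖F i‖ * ‖Sinv (F i)‖ = c := (Finset.mem_filter.1 hi).2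
    have hnorm : ‖G i‖ < ‖Sinv (F i)‖ :=
      lt_of_mul_lt_mul_left ((hlt i).trans_eq hi'.symm) (mul_nonneg (hq0 i) (norm_nonneg _))
    have hexp := norm_add_sq (𝕜 := ℂ) (Sinv (F i)) (G i - Sinv (F i))
    rw [add_sub_cancel, RCLike.re_eq_complex_re] at hexp
    nlinarith [norm_nonneg (G i), sq_nonneg ‖G i - Sinv (F i)‖]
  have hsum := Finset.sum_lt_sum_of_nonempty
    ⟨i₀, Finset.mem_filter.2 ⟨Finset.mem_univ _, hi₀⟩⟩ hneg
  rw [← Complex.re_sum, htr] at hsum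
  simp at hsum
end

section
/- Let F = (f_1, …, f_N) be a probabilistic uniform Parseval frame for an n-dimensional complex Hilbert space H with weight numbers (q_i), i.e. F is a Parseval frame with ‖f_i‖² = 1/q_i for every i. Then for every dual G of F one has max_{1 ≤ i ≤ N} q_i ‖f_i‖ ‖g_i‖ ≥ max_{1 ≤ i ≤ N} q_i ‖f_i‖² = 1, and any dual G attaining equality satisfies g_i = f_i for every i; that is, the canonical dual F is the unique 1-erasure probabilistic optimal dual of F. -/
/-!
Taking the trace of the reconstruction identity `f = ∑ i, ⟪F i, f⟫ • G i` gives
`∑ i, ⟪F i, G i⟫ = n`, and the weights satisfy `∑ i, 1 / q i = n` because `∑ i, p i = 1`.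
With `‖F i‖² = 1 / q i`, Cauchy–Schwarz yields
`n ≤ ∑ i, ‖F i‖ ‖G i‖ ≤ M ∑ i, 1 / q i = M n` for `M = max_i q i ‖F i‖ ‖G i‖`, so `1 ≤ M`.
If `M = 1`, then `‖G i‖ ≤ ‖F i‖` for every `i`, and therefore
`∑ i, ‖G i - F i‖² = ∑ i, (‖G i‖² + ‖F i‖²) - 2 n ≤ 2 ∑ i, 1 / q i - 2 n = 0`.
-/

open scoped InnerProductSpace

/-- The trace of the identity, written as `∑ i, ⟪F i, ·⟫ • G i`. -/
lemma sum_inner_dual_eq_finrank {H : Type*} [NormedAddCommGroup H]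
    [InnerProductSpace ℂ H] [FiniteDimensional ℂ H] {N : ℕ} (F G : Fin N → H)
    (hG : ∀ f : H, ∑ i, ⟪F i, f⟫_ℂ • G i = f) :
    ∑ i, ⟪F i, G i⟫_ℂ = (Module.finrank ℂ H : ℂ) := by
  let b := stdOrthonormalBasis ℂ H
  have h1 : ∀ j, ∑ i, ⟪F i, b j⟫_ℂ * ⟪b j, G i⟫_ℂ = 1 := by
    intro j
    have h := congrArg (fun v => ⟪b j, v⟫_ℂ) (hG (b j))
    simpa [inner_sum, inner_smul_right] using h
  calc ∑ i, ⟪F i, G i⟫_ℂ = ∑ i, ∑ j, ⟪F i, b j⟫_ℂ * ⟪b j, G i⟫_ℂ := by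
        simp only [b.sum_inner_mul_inner]
    _ = ∑ j, ∑ i, ⟪F i, b j⟫_ℂ * ⟪b j, G i⟫_ℂ := Finset.sum_comm
    _ = (Module.finrank ℂ H : ℂ) := by simp [h1]

lemma le_finMax {N : ℕ} (hN : 0 < N) (f : Fin N → ℝ) (i : Fin N) : f i ≤ finMax hN f :=
  Finset.le_sup' f (Finset.mem_univ i)

/-- Let `F` be a probabilistic uniform Parseval frame for an `n`-dimensional
complex Hilbert space with weight numbers `q`, i.e. `F` is Parseval and `‖f i‖² = 1/q i`
for every `i`.  Then `max_i q i ‖f i‖² = 1`, every dual `G` of `F` satisfies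
`max_i q i ‖f i‖ ‖g i‖ ≥ 1`, and any dual attaining equality satisfies `g i = f i` for all
`i`; that is, the canonical dual `F` is the unique 1-erasure probabilistic optimal dual. -/
theorem uniform_parseval_unique_optimal_dual {H : Type*} [NormedAddCommGroup H]
    [InnerProductSpace ℂ H] [FiniteDimensional ℂ H] {n N : ℕ}
    (hn : 1 ≤ n) (hdim : Module.finrank ℂ H = n) (hN : 0 < N)
    (p : Fin N → ℝ) (hp0 : ∀ i, 0 ≤ p i) (hp1 : ∀ i, p i < 1) (hpsum : ∑ i, p i = 1)
    (q : Fin N → ℝ) (hq : ∀ i, q i = ((N : ℝ) - 1) / ((n : ℝ) * (1 - p i)))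
    (F : Fin N → H)
    (hparseval : ∀ f : H, ∑ i, ‖⟪F i, f⟫_ℂ‖ ^ 2 = ‖f‖ ^ 2)
    (huniform : ∀ i, ‖F i‖ ^ 2 = 1 / q i) :
    finMax hN (fun i => q i * ‖F i‖ ^ 2) = 1 ∧
    ∀ G : Fin N → H, (∀ f : H, ∑ i, ⟪F i, f⟫_ℂ • G i = f) →
      1 ≤ finMax hN (fun i => q i * ‖F i‖ * ‖G i‖) ∧
      (finMax hN (fun i => q i * ‖F i‖ * ‖G i‖) = 1 → ∀ i, G i = F i) := by
  -- A single index would carry all the probability, contradicting `p i < 1`.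
  have hN2 : (1 : ℝ) < N := by
    have h : ∑ i, p i < ∑ _i : Fin N, (1 : ℝ) :=
      Finset.sum_lt_sum_of_nonempty
        (Finset.univ_nonempty_iff.mpr (Fin.pos_iff_nonempty.mp hN)) fun i _ => hp1 i
    simpa [hpsum] using h
  have hn0 : (0 : ℝ) < n := by exact_mod_cast hn
  have hq0 : ∀ i, 0 < q i := fun i => by
    rw [hq i]
    exact div_pos (sub_pos.mpr hN2) (mul_pos hn0 (sub_pos.mpr (hp1 i)))
  have hqF : ∀ i, q i * ‖F i‖ ^ 2 = 1 := fun i => by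
    rw [huniform i, mul_one_div_cancel (hq0 i).ne']
  have hqsum : ∑ i, ‖F i‖ ^ 2 = (n : ℝ) := by
    have hN3 : (N : ℝ) - 1 ≠ 0 := (sub_pos.mpr hN2).ne'
    calc ∑ i, ‖F i‖ ^ 2 = ∑ i, (n : ℝ) / ((N : ℝ) - 1) * (1 - p i) :=
          Finset.sum_congr rfl fun i _ => by rw [huniform i, hq i, one_div_div]; ring
      _ = (n : ℝ) / ((N : ℝ) - 1) * ((N : ℝ) - 1) := by
          rw [← Finset.mul_sum, Finset.sum_sub_distrib, hpsum]
          simp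
      _ = n := div_mul_cancel₀ _ hN3
  refine ⟨?_, fun G hG => ?_⟩
  · simp only [hqF, finMax, Finset.sup'_const]
  have htr : ∑ i, (⟪F i, G i⟫_ℂ).re = (n : ℝ) := by
    have h := congrArg Complex.re (sum_inner_dual_eq_finrank F G hG)
    simpa [hdim] using h
  have hle : ∀ i, ‖F i‖ * ‖G i‖ ≤ finMax hN (fun i => q i * ‖F i‖ * ‖G i‖) * ‖F i‖ ^ 2 := by
    intro i
    have h := mul_le_mul_of_nonneg_right
      (le_finMax hN (fun i => q i * ‖F i‖ * ‖G i‖) i) (sq_nonneg ‖F i‖)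
    calc ‖F i‖ * ‖G i‖ = (q i * ‖F i‖ ^ 2) * (‖F i‖ * ‖G i‖) := by rw [hqF, one_mul]
      _ = q i * ‖F i‖ * ‖G i‖ * ‖F i‖ ^ 2 := by ring
      _ ≤ _ := h
  refine ⟨?_, fun hM => ?_⟩
  · have h : (n : ℝ) ≤ finMax hN (fun i => q i * ‖F i‖ * ‖G i‖) * n := by
      calc (n : ℝ) = ∑ i, (⟪F i, G i⟫_ℂ).re := htr.symm
        _ ≤ ∑ i, finMax hN (fun i => q i * ‖F i‖ * ‖G i‖) * ‖F i‖ ^ 2 :=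
            Finset.sum_le_sum fun i _ => (re_inner_le_norm (𝕜 := ℂ) (F i) (G i)).trans (hle i)
        _ = _ := by rw [← Finset.mul_sum, hqsum]
    exact (le_mul_iff_one_le_left hn0).mp h
  · have hGF : ∀ i, ‖G i‖ ≤ ‖F i‖ := by
      intro i
      have hF0 : 0 < ‖F i‖ := by
        refine (norm_nonneg _).lt_of_ne fun h0 => ?_
        have := hqF i
        rw [← h0] at this
        norm_num at this
      have h := hle i
      rw [hM, one_mul, sq] at h
      exact le_of_mul_le_mul_left h hF0
    have hsum : ∑ i, ‖F i - G i‖ ^ 2 ≤ 0 := by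
      calc ∑ i, ‖F i - G i‖ ^ 2
          ≤ ∑ i, (2 * ‖F i‖ ^ 2 - 2 * (⟪F i, G i⟫_ℂ).re) := by
            refine Finset.sum_le_sum fun i _ => ?_
            have h := norm_sub_sq (𝕜 := ℂ) (F i) (G i)
            have h2 := pow_le_pow_left₀ (norm_nonneg _) (hGF i) 2
            simp only [RCLike.re_eq_complex_re] at h
            linarith
        _ = 0 := by
            rw [Finset.sum_sub_distrib, ← Finset.mul_sum, ← Finset.mul_sum, hqsum, htr, sub_self]
    intro i
    have h0 := (Finset.single_le_sum (f := fun i => ‖F i - G i‖ ^ 2)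
      (fun j _ => sq_nonneg _) (Finset.mem_univ i)).trans hsum
    have h1 : ‖F i - G i‖ = 0 := pow_eq_zero_iff two_ne_zero |>.mp (le_antisymm h0 (sq_nonneg _))
    exact (sub_eq_zero.mp (norm_eq_zero.mp h1)).symm
end

section
/- Let F = (f_1, …, f_N) be a Parseval frame for an n-dimensional complex Hilbert space H with weight numbers (q_i). Then the following are equivalent: (i) for every dual G of F, max_{1 ≤ i ≤ N} q_i ‖f_i‖² ≤ max_{1 ≤ i ≤ N} q_i ‖f_i‖ ‖g_i‖ (the canonical dual F is a 1-erasure probabilistic optimal dual of F); (ii) for every dual G of F, max_{1 ≤ i ≤ N} q_i ‖f_i‖² ≤ max_{1 ≤ i ≤ N} q_i |⟨f_i, g_i⟩| (the canonical dual F is a 1-erasure probabilistic spectrally optimal dual of F). -/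
/-!
By Cauchy–Schwarz, spectral optimality of `F` implies optimality. Conversely, suppose a dual `G`
satisfies `max q i |⟨f i, g i⟩| < M`, where `M = max q i ‖f i‖²`. Duals form an affine space and a
Parseval frame is its own dual (`parseval_reconstruction`), so `F + t (G - F)` is a dual for every
`t`. At each index with `q i ‖f i‖² = M` the strict inequality forces `Re ⟨f i, g i - f i⟩ < 0`, so
moving from `f i` towards `g i` strictly decreases the norm to first order
(`eventually_norm_lt`); at the remaining indices `q i ‖f i‖ ‖f i + t (g i - f i)‖` stays below `M`
by continuity. As there are finitely many indices, a small `t > 0` yields a dual violating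
optimality of `F`.
-/

open scoped InnerProductSpace

open Filter Topology in
/-- If `⟪y, x⟫` is smaller in modulus than `‖x‖ ^ 2`, then moving slightly from `x` towards `y`
strictly decreases the norm, since `‖x + t (y - x)‖ ^ 2` has negative derivative at `t = 0`. -/
lemma eventually_norm_lt {H : Type*} [NormedAddCommGroup H] [InnerProductSpace ℂ H] (x y : H)
    (h : ‖⟪y, x⟫_ℂ‖ < ‖x‖ ^ 2) :
    ∀ᶠ t : ℝ in 𝓝[>] 0, ‖x + (t : ℂ) • (y - x)‖ < ‖x‖ := by
  set c : ℝ := RCLike.re ⟪x, y - x⟫_ℂ with hc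
  have hc0 : c < 0 := by
    have h1 : RCLike.re ⟪x, y⟫_ℂ ≤ ‖⟪y, x⟫_ℂ‖ := by
      rw [norm_inner_symm]
      exact RCLike.re_le_norm _
    have h2 : RCLike.re ⟪x, x⟫_ℂ = ‖x‖ ^ 2 := inner_self_eq_norm_sq x
    rw [hc, inner_sub_right, map_sub, h2]
    linarith
  have hlim : ∀ᶠ t : ℝ in 𝓝 0, 2 * c + t * ‖y - x‖ ^ 2 < 0 := by
    have hcont : ContinuousAt (fun t : ℝ => 2 * c + t * ‖y - x‖ ^ 2) 0 := by fun_prop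
    exact hcont.eventually_lt continuousAt_const (by linarith)
  filter_upwards [hlim.filter_mono nhdsWithin_le_nhds, self_mem_nhdsWithin] with t ht ht0
  have ht0 : 0 < t := ht0
  refine lt_of_pow_lt_pow_left₀ 2 (norm_nonneg _) ?_
  have hre : RCLike.re ⟪x, (t : ℂ) • (y - x)⟫_ℂ = t * c := by
    rw [inner_smul_right, hc]
    exact Complex.re_ofReal_mul _ _
  have hnorm : ‖(t : ℂ) • (y - x)‖ = t * ‖y - x‖ := by
    rw [norm_smul, Complex.norm_real, Real.norm_of_nonneg ht0.le]
  rw [@norm_add_sq ℂ, hre, hnorm]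
  nlinarith [mul_neg_of_pos_of_neg ht0 ht]

/-- A Parseval frame is a dual of itself: over `ℂ`, an operator is determined by its quadratic
form, and that of the frame operator is `f ↦ ‖f‖ ^ 2`. -/
lemma parseval_reconstruction {H : Type*} [NormedAddCommGroup H] [InnerProductSpace ℂ H]
    {N : ℕ} (F : Fin N → H) (hparseval : ∀ f : H, ∑ i, ‖⟪F i, f⟫_ℂ‖ ^ 2 = ‖f‖ ^ 2) (f : H) :
    ∑ i, ⟪F i, f⟫_ℂ • F i = f := by
  let T : H →ₗ[ℂ] H := ∑ i, (innerₛₗ ℂ (F i)).smulRight (F i)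
  have hT : ∀ x, T x = ∑ i, ⟪F i, x⟫_ℂ • F i := fun x => by simp [T]
  have key : T = LinearMap.id := by
    rw [← ext_inner_map]
    intro x
    rw [hT, sum_inner, LinearMap.id_apply, inner_self_eq_norm_sq_to_K, ← RCLike.ofReal_pow,
      ← hparseval x, RCLike.ofReal_sum]
    refine Finset.sum_congr rfl fun i _ => ?_
    rw [inner_smul_left, RCLike.conj_mul, RCLike.ofReal_pow]
  rw [← hT, key, LinearMap.id_apply]

lemma finMax_lt_iff {N : ℕ} (hN : 0 < N) (f : Fin N → ℝ) (a : ℝ) :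
    finMax hN f < a ↔ ∀ i, f i < a := by
  simp [finMax, Finset.sup'_lt_iff]

/-- For a Parseval frame `F` of an `n`-dimensional complex Hilbert space with
weight numbers `q`, the canonical dual `F` is a 1-erasure probabilistic optimal dual of `F`
(i.e. `max_i q i ‖f i‖² ≤ max_i q i ‖f i‖ ‖g i‖` for every dual `G`) if and only if it is a
1-erasure probabilistic spectrally optimal dual of `F`
(i.e. `max_i q i ‖f i‖² ≤ max_i q i |⟨f i, g i⟩|` for every dual `G`).
Paper's `⟨f i, g i⟩` (linear in the first argument) is Mathlib's `⟪G i, F i⟫_ℂ`. -/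
theorem parseval_optimal_iff_spectrally_optimal {H : Type*} [NormedAddCommGroup H]
    [InnerProductSpace ℂ H] [FiniteDimensional ℂ H] {n N : ℕ}
    (hn : 1 ≤ n) (hdim : Module.finrank ℂ H = n) (hN : 0 < N)
    (p : Fin N → ℝ) (hp0 : ∀ i, 0 ≤ p i) (hp1 : ∀ i, p i < 1) (hpsum : ∑ i, p i = 1)
    (q : Fin N → ℝ) (hq : ∀ i, q i = ((N : ℝ) - 1) / ((n : ℝ) * (1 - p i)))
    (F : Fin N → H)
    (hparseval : ∀ f : H, ∑ i, ‖⟪F i, f⟫_ℂ‖ ^ 2 = ‖f‖ ^ 2) :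
    ((∀ G : Fin N → H, (∀ f : H, ∑ i, ⟪F i, f⟫_ℂ • G i = f) →
        finMax hN (fun i => q i * ‖F i‖ ^ 2) ≤
          finMax hN (fun i => q i * ‖F i‖ * ‖G i‖)) ↔
      (∀ G : Fin N → H, (∀ f : H, ∑ i, ⟪F i, f⟫_ℂ • G i = f) →
        finMax hN (fun i => q i * ‖F i‖ ^ 2) ≤
          finMax hN (fun i => q i * ‖⟪G i, F i⟫_ℂ‖))) := by
  have hq0 : ∀ i, 0 ≤ q i := fun i => by
    rw [hq]
    have : (1 : ℝ) ≤ N := by exact_mod_cast hN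
    exact div_nonneg (by linarith) (mul_nonneg n.cast_nonneg (by linarith [hp1 i]))
  constructor
  · intro hopt G hG
    by_contra! hlt
    set M := finMax hN (fun i => q i * ‖F i‖ ^ 2) with hM
    rw [finMax_lt_iff] at hlt
    have hev : ∀ i, ∀ᶠ t : ℝ in nhdsWithin 0 (Set.Ioi 0),
        q i * ‖F i‖ * ‖F i + (t : ℂ) • (G i - F i)‖ < M := by
      intro i
      rcases (le_finMax hN (fun i => q i * ‖F i‖ ^ 2) i).lt_or_eq with h | h
      · have hcont : ContinuousAt
            (fun t : ℝ => q i * ‖F i‖ * ‖F i + (t : ℂ) • (G i - F i)‖) 0 := by fun_prop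
        refine (hcont.eventually_lt continuousAt_const ?_).filter_mono nhdsWithin_le_nhds
        simpa [mul_assoc, ← pow_two] using h
      · have hi : q i * ‖⟪G i, F i⟫_ℂ‖ < q i * ‖F i‖ ^ 2 := (hlt i).trans_eq h.symm
        have hin : ‖⟪G i, F i⟫_ℂ‖ < ‖F i‖ ^ 2 := lt_of_mul_lt_mul_left hi (hq0 i)
        -- The strict inequality at `i` excludes `q i = 0` and `F i = 0`.
        have hqi : 0 < q i := (hq0 i).lt_of_ne fun h0 => by simp [← h0] at hi
        have hFi : 0 < ‖F i‖ := (norm_nonneg _).lt_of_ne fun h0 => by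
          rw [← h0] at hin
          linarith [norm_nonneg ⟪G i, F i⟫_ℂ]
        filter_upwards [eventually_norm_lt (F i) (G i) hin] with t ht
        calc q i * ‖F i‖ * ‖F i + (t : ℂ) • (G i - F i)‖
            < q i * ‖F i‖ * ‖F i‖ := mul_lt_mul_of_pos_left ht (mul_pos hqi hFi)
          _ = q i * ‖F i‖ ^ 2 := by ring
          _ = M := h
    obtain ⟨t, ht⟩ := (Filter.eventually_all.mpr hev).exists
    refine absurd (hopt (fun i => F i + (t : ℂ) • (G i - F i)) fun f => ?_)
      (not_le.mpr ((finMax_lt_iff hN _ _).mpr ht))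
    simp only [smul_add, smul_sub, Finset.sum_add_distrib, Finset.sum_sub_distrib,
      smul_comm _ (t : ℂ), ← Finset.smul_sum]
    rw [hG f, parseval_reconstruction F hparseval f, sub_self, add_zero]
  · intro hspec G hG
    refine (hspec G hG).trans (Finset.sup'_mono_fun fun i _ => ?_)
    rw [mul_assoc, mul_comm ‖F i‖]
    exact mul_le_mul_of_nonneg_left (norm_inner_le_norm _ _) (hq0 i)
end
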